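/- Let d ≥ 3, let Ω ⊂ ℝ^d be a compact convex set of positive measure, let l ⊂ ℝ^d be a hyperplane through the origin, let u_l be a unit vector orthogonal to l, and let H ⊂ ℝ be a uniformly discrete set. Then the union of parallel hyperplanes P = l + H u_l = ⋃_{a∈H} (l + a·u_l) is a sampling set for B_Ω if and only if D⁻(H)·u_l ∉ Ω − Ω. -/

import Mathlib

open MeasureTheory FourierTransform Filter Metric
open scoped Pointwise RealInnerProductSpace ENNReal NNReal

noncomputable section

variable {V : Type*} [NormedAddCommGroup V] [InnerProductSpace ℝ V]
  [FiniteDimensional ℝ V] [MeasurableSpace V] [BorelSpace V]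

/-- `f` belongs to the Bernstein space `B_Ω`: it is a continuous bounded function which is the
inverse Fourier transform of a tempered distribution supported in `Ω`, i.e. its distributional
Fourier transform annihilates every test function whose support is disjoint from `Ω`. -/
def MemBernstein (Ω : Set V) (f : V → ℂ) : Prop :=
  Continuous f ∧ (∃ C, ∀ x, ‖f x‖ ≤ C) ∧
    ∀ ψ : V → ℂ, ContDiff ℝ (⊤ : ℕ∞) ψ → HasCompactSupport ψ → tsupport ψ ∩ Ω = ∅ →
      ∫ x, f x * 𝓕 ψ x = 0

/-- `P` is a sampling set for the Bernstein space `B_Ω`: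
`‖f‖_∞ ≤ C · sup_{x ∈ P} ‖f x‖` for all `f ∈ B_Ω`. -/
def IsSamplingSet (Ω P : Set V) : Prop :=
  ∃ C > 0, ∀ f : V → ℂ, MemBernstein Ω f →
    ∀ x : V, ‖f x‖ ≤ C * sSup ((fun p => ‖f p‖) '' P)

/-- A set is uniformly discrete if distinct points are separated by a fixed positive distance. -/
def UniformlyDiscrete {X : Type*} [PseudoMetricSpace X] (Λ : Set X) : Prop :=
  ∃ δ > 0, ∀ x ∈ Λ, ∀ y ∈ Λ, x ≠ y → δ ≤ dist x y

/-- The lower uniform (Beurling) density of a set: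
`D⁻(Λ) = lim_{r→∞} inf_x #(Λ ∩ B_r(x)) / |B_r(x)|`. -/
def lowerUniformDensity {X : Type*} [NormedAddCommGroup X] [MeasureSpace X] (Λ : Set X) : ℝ :=
  liminf (fun r : ℝ => ⨅ x : X,
    (Nat.card ↥(Λ ∩ closedBall x r) : ℝ) / (volume (closedBall x r)).toReal) atTop

/-!
Necessity. If `D⁻(H) • u ∈ Ω - Ω`, then `Ω` contains a segment of length `D⁻(H)` parallel to `u`, so
the values on `H` control all trigonometric sums on the line with frequencies in `[-σ, σ]`, where
`2σ = D⁻(H)`. Averaging such a sum over slightly contracted, localized copies of itself shows that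
`H` then also controls a slightly larger bandwidth `σ' > σ`. On the other hand, a trigonometric
polynomial vanishing at the points of `H` in a long interval shows that controlling `[-σ', σ']`
forces `2σ' < D⁻(H)`, a contradiction.

Sufficiency. If `D⁻(H) • u ∉ Ω - Ω`, then by compactness and convexity the pieces of `Ω` over small
balls of the hyperplane orthogonal to `u` have width at most some `L < D⁻(H)` in direction `u`. A
smooth partition of unity on that hyperplane splits `f` into functions with spectra in such pieces,
each an average of translates of `f` along the hyperplanes. Restricting a piece to lines parallel to
`u` reduces the claim to Beurling's theorem that `H` is a sampling set for `[-L/2, L/2]`: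
subtracting a small interpolation polynomial from a function of this bandwidth that is small on `H`
would create more zeros than Jensen's formula allows.
-/

open Topology Set

/-! ### Test functions and Fourier multipliers -/

section TestFunctions

variable {E : Type*} [NormedAddCommGroup E] [InnerProductSpace ℝ E]

/-- Test functions: smooth compactly supported complex-valued functions. -/
structure IsTestFunction (ψ : E → ℂ) : Prop where
  contDiff : ContDiff ℝ (⊤ : ℕ∞) ψ
  hasCompactSupport : HasCompactSupport ψ

lemma contDiff_fourierChar_inner (c : E) :
    ContDiff ℝ (⊤ : ℕ∞) (fun x : E => (𝐞 ⟪x, c⟫ : ℂ)) := by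
  simp only [Real.fourierChar_apply]
  exact ((Complex.ofRealCLM.contDiff.comp
    (contDiff_const.mul (contDiff_id.inner ℝ contDiff_const))).mul contDiff_const).cexp

lemma fourier_comp_add_right [FiniteDimensional ℝ E] [MeasurableSpace E] [BorelSpace E]
    (ψ : E → ℂ) (c t : E) : 𝓕 (fun s => ψ (s + c)) t = 𝐞 ⟪c, t⟫ * 𝓕 ψ t :=
  congr_fun (VectorFourier.fourierIntegral_comp_add_right 𝐞 volume (innerₗ E) ψ c) t

namespace IsTestFunction

lemma mul_left {m ψ : E → ℂ} (hψ : IsTestFunction ψ) (hm : ContDiff ℝ (⊤ : ℕ∞) m) :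
    IsTestFunction (fun s => m s * ψ s) :=
  ⟨hm.mul hψ.contDiff, hψ.hasCompactSupport.mul_left⟩

lemma comp_add_right {ψ : E → ℂ} (hψ : IsTestFunction ψ) (c : E) :
    IsTestFunction (fun s => ψ (s + c)) :=
  ⟨hψ.contDiff.comp (by fun_prop),
    hψ.hasCompactSupport.comp_homeomorph (Homeomorph.addRight c)⟩

lemma ofReal {φ : E → ℝ} (hφ : ContDiff ℝ (⊤ : ℕ∞) φ) (hc : HasCompactSupport φ) :
    IsTestFunction (fun s => (φ s : ℂ)) :=
  ⟨Complex.ofRealCLM.contDiff.comp hφ, hc.comp_left Complex.ofReal_zero⟩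

variable [FiniteDimensional ℝ E] [MeasurableSpace E] [BorelSpace E]
  {ψ : E → ℂ}

lemma integrable (hψ : IsTestFunction ψ) : Integrable ψ :=
  hψ.contDiff.continuous.integrable_of_hasCompactSupport hψ.hasCompactSupport

lemma integrable_fourier (hψ : IsTestFunction ψ) : Integrable (𝓕 ψ) :=
  (𝓕 (hψ.hasCompactSupport.toSchwartzMap hψ.contDiff)).integrable

lemma continuous_fourier (hψ : IsTestFunction ψ) : Continuous (𝓕 ψ) :=
  (𝓕 (hψ.hasCompactSupport.toSchwartzMap hψ.contDiff)).continuous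

lemma integral_fourierChar_mul_fourier (hψ : IsTestFunction ψ) (x : E) :
    ∫ t, 𝐞 ⟪x, t⟫ * 𝓕 ψ t = ψ x := by
  have h := hψ.integrable.fourierInv_fourier_eq hψ.integrable_fourier
    hψ.contDiff.continuous.continuousAt (v := x)
  simpa only [Real.fourierInv_eq, Circle.smul_def, smul_eq_mul, real_inner_comm] using h

end IsTestFunction

end TestFunctions

lemma exists_isTestFunction_fourier_ne_zero (x : V) :
    ∃ ψ : V → ℂ, IsTestFunction ψ ∧ 𝓕 ψ x ≠ 0 := by
  let b : ContDiffBump (0 : V) := ⟨1, 2, one_pos, one_lt_two⟩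
  refine ⟨fun s => 𝐞 ⟪s, x⟫ * b s, (IsTestFunction.ofReal b.contDiff
    b.hasCompactSupport).mul_left (contDiff_fourierChar_inner x), ?_⟩
  have h : 𝓕 (fun s => (𝐞 ⟪s, x⟫ : ℂ) * b s) x = ((∫ s, b s : ℝ) : ℂ) := by
    rw [Real.fourier_eq, ← integral_complex_ofReal]
    refine integral_congr_ae (ae_of_all _ fun s => ?_)
    simp [Circle.smul_def, AddChar.map_neg_eq_inv]
  rw [h]
  exact_mod_cast b.integral_pos.ne'

section Averages

variable {E W : Type*} [NormedAddCommGroup E] [MeasurableSpace E] [BorelSpace E]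
  [MeasurableSpace W] {ν : Measure W} {f : E → ℂ} {C : ℝ} {k : W → ℂ} {y : W → E}

lemma norm_integral_mul_le_of_norm_le {g : W → ℂ} (hC : ∀ t, ‖g t‖ ≤ C) (hk : Integrable k ν) :
    ‖∫ t, g t * k t ∂ν‖ ≤ C * ∫ t, ‖k t‖ ∂ν := by
  rw [← integral_const_mul]
  refine norm_integral_le_of_norm_le (hk.norm.const_mul C) (ae_of_all _ fun t => ?_)
  rw [norm_mul]
  gcongr
  exact hC t

lemma continuous_integral_comp_add_mul (hf : Continuous f) (hC : ∀ x, ‖f x‖ ≤ C)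
    (hk : Integrable k ν) (hy : Measurable y) :
    Continuous (fun x => ∫ t, f (x + y t) * k t ∂ν) := by
  refine continuous_of_dominated (bound := fun t => C * ‖k t‖) (fun x => ?_)
    (fun x => ae_of_all _ fun t => ?_) (hk.norm.const_mul C) (ae_of_all _ fun t => by fun_prop)
  · exact (hf.measurable.comp (hy.const_add x)).aestronglyMeasurable.mul hk.aestronglyMeasurable
  · rw [norm_mul]
    gcongr
    exact hC _

variable [SecondCountableTopology E] [SFinite ν]

lemma integral_average_mul {μ : Measure E} [SFinite μ] [μ.IsAddRightInvariant] {g : E → ℂ}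
    (hf : Continuous f) (hC : ∀ x, ‖f x‖ ≤ C)
    (hk : Integrable k ν) (hy : Measurable y) (hg : Integrable g μ) :
    ∫ x, (∫ t, f (x + y t) * k t ∂ν) * g x ∂μ = ∫ x, f x * ∫ t, k t * g (x - y t) ∂ν ∂μ := by
  have hshear : MeasurePreserving (fun p : W × E => (p.1, p.2 - y p.1))
      (ν.prod μ) (ν.prod μ) :=
    (MeasurePreserving.id ν).skew_product (g := fun t x => x - y t) (by fun_prop)
      (ae_of_all _ fun t => (measurePreserving_sub_right μ (y t)).map_eq)
  have hint : Integrable (fun p : W × E => f (p.2 + y p.1) * (k p.1 * g p.2)) (ν.prod μ) :=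
    (hk.mul_prod hg).bdd_mul (hf.measurable.comp (by fun_prop)).aestronglyMeasurable
      (ae_of_all _ fun _ => hC _)
  have hint' : Integrable (fun p : W × E => f p.2 * (k p.1 * g (p.2 - y p.1))) (ν.prod μ) := by
    simpa [Function.comp_def] using hshear.integrable_comp_of_integrable hint
  calc ∫ x, (∫ t, f (x + y t) * k t ∂ν) * g x ∂μ
      = ∫ x, ∫ t, f (x + y t) * (k t * g x) ∂ν ∂μ := by simp only [← integral_mul_const, mul_assoc]
    _ = ∫ t, (∫ x, f (x + y t) * (k t * g x) ∂μ) ∂ν := (integral_integral_swap hint).symm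
    _ = ∫ t, (∫ x, f x * (k t * g (x - y t)) ∂μ) ∂ν := by
        refine integral_congr_ae (ae_of_all _ fun t => ?_)
        simpa using integral_add_right_eq_self (μ := μ) (fun x => f x * (k t * g (x - y t))) (y t)
    _ = ∫ x, ∫ t, f x * (k t * g (x - y t)) ∂ν ∂μ := integral_integral_swap hint'
    _ = ∫ x, f x * ∫ t, k t * g (x - y t) ∂ν ∂μ := by simp only [integral_const_mul]

lemma fourier_integral_fourierChar_mul {y : W → V} {φ : V → ℂ} (hk : Integrable k ν)
    (hy : Measurable y) (hφ : Integrable φ) (x : V) :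
    𝓕 (fun s => (∫ t, 𝐞 ⟪s, y t⟫ * k t ∂ν) * φ s) x = ∫ t, k t * 𝓕 φ (x - y t) ∂ν := by
  have hint : Integrable (fun p : V × W => (𝐞 (-⟪p.1, x - y p.2⟫) : ℂ) * (φ p.1 * k p.2))
      (volume.prod ν) := by
    refine (hφ.mul_prod hk).bdd_mul (c := 1) ?_ (ae_of_all _ fun p => (Circle.norm_coe _).le)
    have hchar : Measurable fun r : ℝ => (𝐞 r : ℂ) :=
      (continuous_subtype_val.comp Real.continuous_fourierChar).measurable
    exact (hchar.comp (by fun_prop)).aestronglyMeasurable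
  have hsplit : ∀ s t, (𝐞 (-⟪s, x - y t⟫) : ℂ) = 𝐞 (-⟪s, x⟫) * 𝐞 ⟪s, y t⟫ := fun s t => by
    rw [inner_sub_right, neg_sub, sub_eq_neg_add, AddChar.map_add_eq_mul, Circle.coe_mul]
  calc 𝓕 (fun s => (∫ t, 𝐞 ⟪s, y t⟫ * k t ∂ν) * φ s) x
      = ∫ s, ∫ t, 𝐞 (-⟪s, x - y t⟫) * (φ s * k t) ∂ν := by
        rw [Real.fourier_eq]
        refine integral_congr_ae (ae_of_all _ fun s => ?_)
        simp only [Circle.smul_def, smul_eq_mul, hsplit]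
        rw [← integral_mul_const, ← integral_const_mul]
        refine integral_congr_ae (ae_of_all _ fun t => ?_)
        ring
    _ = ∫ t, (∫ s, 𝐞 (-⟪s, x - y t⟫) * (φ s * k t)) ∂ν := integral_integral_swap hint
    _ = ∫ t, k t * 𝓕 φ (x - y t) ∂ν := by
        refine integral_congr_ae (ae_of_all _ fun t => ?_)
        simp only [Real.fourier_eq, Circle.smul_def, smul_eq_mul, ← integral_const_mul]
        refine integral_congr_ae (ae_of_all _ fun s => ?_)
        ring

end Averages

namespace MemBernstein

variable {Ω : Set V} {f : V → ℂ}

lemma integrable_mul (hf : MemBernstein Ω f) {k : V → ℂ} (hk : Integrable k) :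
    Integrable (fun t => f t * k t) := by
  obtain ⟨C, hC⟩ := hf.2.1
  exact hk.bdd_mul hf.1.aestronglyMeasurable (ae_of_all _ hC)

lemma integral_mul_fourier (hf : MemBernstein Ω f) {ψ : V → ℂ} (hψ : IsTestFunction ψ)
    (hd : tsupport ψ ∩ Ω = ∅) : ∫ x, f x * 𝓕 ψ x = 0 :=
  hf.2.2 ψ hψ.contDiff hψ.hasCompactSupport hd

lemma mono {Ω' : Set V} (hf : MemBernstein Ω f) (h : Ω ⊆ Ω') : MemBernstein Ω' f :=
  ⟨hf.1, hf.2.1, fun ψ hψ hc hd => hf.2.2 ψ hψ hc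
    (subset_empty_iff.1 (hd ▸ inter_subset_inter_right _ h))⟩

lemma const_mul (hf : MemBernstein Ω f) (a : ℂ) : MemBernstein Ω (fun t => a * f t) := by
  obtain ⟨C, hC⟩ := hf.2.1
  refine ⟨by have := hf.1; fun_prop, ⟨‖a‖ * C, fun t => ?_⟩, fun ψ hψ hc hd => ?_⟩
  · rw [norm_mul]
    gcongr
    exact hC t
  · simp only [mul_assoc, integral_const_mul, hf.2.2 ψ hψ hc hd, mul_zero]

lemma zero : MemBernstein Ω (fun _ : V => (0 : ℂ)) :=
  ⟨continuous_const, ⟨0, by simp⟩, by simp⟩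

lemma add {g : V → ℂ} (hf : MemBernstein Ω f) (hg : MemBernstein Ω g) :
    MemBernstein Ω (fun t => f t + g t) := by
  obtain ⟨C, hC⟩ := hf.2.1
  obtain ⟨D, hD⟩ := hg.2.1
  refine ⟨hf.1.add hg.1, ⟨C + D, fun t => norm_add_le_of_le (hC t) (hD t)⟩,
    fun ψ hψ hc hd => ?_⟩
  have hψi := (IsTestFunction.mk hψ hc).integrable_fourier
  simp only [add_mul]
  rw [integral_add (hf.integrable_mul hψi) (hg.integrable_mul hψi), hf.2.2 ψ hψ hc hd,
    hg.2.2 ψ hψ hc hd, add_zero]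

lemma of_tendsto {F : ℕ → V → ℂ} (hF : ∀ n, MemBernstein Ω (F n)) {M : ℝ}
    (hM : ∀ n x, ‖F n x‖ ≤ M) (hf : Continuous f)
    (hlim : ∀ x, Tendsto (fun n => F n x) atTop (𝓝 (f x))) : MemBernstein Ω f := by
  refine ⟨hf, ⟨M, fun x => le_of_tendsto (hlim x).norm (Eventually.of_forall (hM · x))⟩,
    fun ψ hψ hc hd => ?_⟩
  have hψi := (IsTestFunction.mk hψ hc).integrable_fourier
  have h : Tendsto (fun n => ∫ x, F n x * 𝓕 ψ x) atTop (𝓝 (∫ x, f x * 𝓕 ψ x)) :=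
    tendsto_integral_of_dominated_convergence (fun x => M * ‖𝓕 ψ x‖)
      (fun n => ((hF n).integrable_mul hψi).aestronglyMeasurable) (hψi.norm.const_mul M)
      (fun n => ae_of_all _ fun x => by rw [norm_mul]; gcongr; exact hM n x)
      (ae_of_all _ fun x => (hlim x).mul_const _)
  simp only [fun n => (hF n).2.2 ψ hψ hc hd] at h
  exact tendsto_nhds_unique h tendsto_const_nhds

lemma fourierChar {c : V} (hc : c ∈ Ω) : MemBernstein Ω (fun t => (𝐞 ⟪t, c⟫ : ℂ)) := by
  refine ⟨(contDiff_fourierChar_inner c).continuous, ⟨1, fun t => (Circle.norm_coe _).le⟩,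
    fun ψ hψ hψc hd => ?_⟩
  simp only [real_inner_comm c]
  rw [(IsTestFunction.mk hψ hψc).integral_fourierChar_mul_fourier c]
  exact image_eq_zero_of_notMem_tsupport fun h =>
    eq_empty_iff_forall_notMem.1 hd c ⟨h, hc⟩

lemma fourierChar_mul (hf : MemBernstein Ω f) (c : V) {Ω' : Set V} (hΩ : ∀ s ∈ Ω, s + c ∈ Ω') :
    MemBernstein Ω' (fun t => 𝐞 ⟪t, c⟫ * f t) := by
  obtain ⟨hcont, ⟨C, hC⟩, -⟩ := id hf
  refine ⟨(contDiff_fourierChar_inner c).continuous.mul hcont, ⟨C, fun t => ?_⟩,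
    fun ψ hψ hψc hd => ?_⟩
  · rw [norm_mul, Circle.norm_coe, one_mul]
    exact hC t
  have hd' : tsupport (fun s => ψ (s + c)) ∩ Ω = ∅ := by
    refine eq_empty_of_forall_notMem fun s hs => eq_empty_iff_forall_notMem.1 hd (s + c) ⟨?_, ?_⟩
    · exact tsupport_comp_subset_preimage ψ (f := fun s => s + c) (by fun_prop) hs.1
    · exact hΩ s hs.2
  have h := hf.integral_mul_fourier ((IsTestFunction.mk hψ hψc).comp_add_right c) hd'
  simp only [_root_.fourier_comp_add_right] at h
  rw [← h]
  congr 1 with t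
  rw [real_inner_comm]
  ring

/-- Uniqueness: against a test function `ψ`, the Fourier transform of the integrable function
`f · 𝓕 ψ` vanishes identically, because modulating `𝓕 ψ` amounts to translating `ψ`. -/
lemma eq_zero (hf : MemBernstein ∅ f) (x : V) : f x = 0 := by
  obtain ⟨ψ, hψ, hψx⟩ := exists_isTestFunction_fourier_ne_zero x
  have hint : Integrable (fun t => f t * 𝓕 ψ t) := hf.integrable_mul hψ.integrable_fourier
  have hcont : Continuous (fun t => f t * 𝓕 ψ t) := hf.1.mul hψ.continuous_fourier
  have hzero : 𝓕 (fun t => f t * 𝓕 ψ t) = 0 := by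
    funext c
    rw [Pi.zero_apply, ← hf.integral_mul_fourier (hψ.comp_add_right (-c)) (inter_empty _),
      Real.fourier_eq]
    congr 1 with t
    rw [_root_.fourier_comp_add_right, inner_neg_left, real_inner_comm, Circle.smul_def,
      smul_eq_mul, mul_left_comm]
  have h := hint.fourierInv_fourier_eq (by rw [hzero]; exact integrable_zero _ _ _)
    (hcont.continuousAt (x := x))
  simpa [hzero, Real.fourierInv_eq, hψx, eq_comm] using h

section Averages

variable {W : Type*} [MeasurableSpace W] {ν : Measure W} [SFinite ν]
  {m : V → ℂ} {k : W → ℂ} {y : W → V}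

lemma integral_average_mul_fourier (hf : MemBernstein Ω f) (hk : Integrable k ν)
    (hy : Measurable y) (hm : ∀ s, ∫ t, 𝐞 ⟪s, y t⟫ * k t ∂ν = m s) {φ : V → ℂ}
    (hφ : IsTestFunction φ) :
    ∫ x, (∫ t, f (x + y t) * k t ∂ν) * 𝓕 φ x = ∫ x, f x * 𝓕 (fun s => m s * φ s) x := by
  obtain ⟨hcont, ⟨C, hC⟩, -⟩ := hf
  simp only [integral_average_mul hcont hC hk hy hφ.integrable_fourier, ← hm,
    fourier_integral_fourierChar_mul hk hy hφ.integrable]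

/-- Averaging translates of `f` multiplies its spectrum by `m`. -/
lemma average (hf : MemBernstein Ω f) (hk : Integrable k ν) (hy : Measurable y)
    (hm : ∀ s, ∫ t, 𝐞 ⟪s, y t⟫ * k t ∂ν = m s) (hms : ContDiff ℝ (⊤ : ℕ∞) m) :
    MemBernstein (Ω ∩ tsupport m) (fun x => ∫ t, f (x + y t) * k t ∂ν) := by
  obtain ⟨hcont, ⟨C, hC⟩, -⟩ := id hf
  refine ⟨continuous_integral_comp_add_mul hcont hC hk hy,
    ⟨_, fun x => norm_integral_mul_le_of_norm_le (fun t => hC _) hk⟩, fun φ hφ hφc hd => ?_⟩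
  have hφ' : IsTestFunction φ := ⟨hφ, hφc⟩
  rw [hf.integral_average_mul_fourier hk hy hm hφ']
  refine hf.integral_mul_fourier (hφ'.mul_left hms) ?_
  rw [← subset_empty_iff, ← hd]
  exact fun s hs => ⟨tsupport_mul_subset_right hs.1, hs.2, tsupport_mul_subset_left hs.1⟩

lemma average_eq_self (hf : MemBernstein Ω f) (hk : Integrable k ν) (hy : Measurable y)
    (hm : ∀ s, ∫ t, 𝐞 ⟪s, y t⟫ * k t ∂ν = m s) (hms : ContDiff ℝ (⊤ : ℕ∞) m)
    (hd : tsupport (fun s => 1 - m s) ∩ Ω = ∅) (x : V) :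
    ∫ t, f (x + y t) * k t ∂ν = f x := by
  suffices h : MemBernstein ∅ (fun x => f x + -1 * ∫ t, f (x + y t) * k t ∂ν) by
    linear_combination -h.eq_zero x
  have havg := (hf.average hk hy hm hms).const_mul (-1)
  obtain ⟨hcont, hbdd, -⟩ := (hf.mono (subset_univ Ω)).add (havg.mono (subset_univ _))
  refine ⟨hcont, hbdd, fun φ hφ hφc _ => ?_⟩
  have hφ' : IsTestFunction φ := ⟨hφ, hφc⟩
  have hsplit : ∀ x, 𝓕 (fun s => (1 - m s) * φ s) x = 𝓕 φ x - 𝓕 (fun s => m s * φ s) x := by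
    intro x
    simp only [sub_mul, one_mul, Real.fourier_eq, smul_sub]
    exact integral_sub ((Real.fourierIntegral_convergent_iff x).2 hφ'.integrable)
      ((Real.fourierIntegral_convergent_iff x).2 (hφ'.mul_left hms).integrable)
  calc ∫ x, (f x + -1 * ∫ t, f (x + y t) * k t ∂ν) * 𝓕 φ x
      = (∫ x, f x * 𝓕 φ x) - ∫ x, (∫ t, f (x + y t) * k t ∂ν) * 𝓕 φ x := by
        simp only [neg_one_mul, ← sub_eq_add_neg, sub_mul]
        refine integral_sub (hf.integrable_mul hφ'.integrable_fourier) ?_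
        exact (hf.average hk hy hm hms).integrable_mul hφ'.integrable_fourier
    _ = ∫ x, f x * 𝓕 (fun s => (1 - m s) * φ s) x := by
        rw [hf.integral_average_mul_fourier hk hy hm hφ', ← integral_sub
          (hf.integrable_mul hφ'.integrable_fourier)
          (hf.integrable_mul (hφ'.mul_left hms).integrable_fourier)]
        simp only [hsplit, mul_sub]
    _ = 0 := by
        refine hf.integral_mul_fourier (hφ'.mul_left (contDiff_const.sub hms)) ?_
        rw [← subset_empty_iff, ← hd]
        exact inter_subset_inter_left _ tsupport_mul_subset_left

lemma integral_mul_fourier_eq_self (hf : MemBernstein Ω f) {χ : V → ℂ} (hχ : IsTestFunction χ)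
    (hd : tsupport (fun s => 1 - χ s) ∩ Ω = ∅) (x : V) : ∫ t, f (x + t) * 𝓕 χ t = f x :=
  hf.average_eq_self hχ.integrable_fourier measurable_id hχ.integral_fourierChar_mul_fourier
    hχ.contDiff hd x

end Averages

lemma comp_add_linearMap {W : Type*} [NormedAddCommGroup W] [InnerProductSpace ℝ W]
    [FiniteDimensional ℝ W] [MeasurableSpace W] [BorelSpace W] (hf : MemBernstein Ω f)
    (A : W →L[ℝ] V) {I : Set W} (hI : ∀ s ∈ Ω, A.adjoint s ∈ I) (x : V) :
    MemBernstein I (fun t => f (x + A t)) := by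
  obtain ⟨hcont, ⟨C, hC⟩, -⟩ := id hf
  refine ⟨by fun_prop, ⟨C, fun t => hC _⟩, fun ψ hψ hψc hd => ?_⟩
  have hψ' : IsTestFunction ψ := ⟨hψ, hψc⟩
  have h := hf.average (m := fun s => ψ (A.adjoint s)) hψ'.integrable_fourier
    A.continuous.measurable
    (fun s => by
      simpa only [ContinuousLinearMap.adjoint_inner_left] using
        hψ'.integral_fourierChar_mul_fourier (A.adjoint s))
    (hψ.comp A.adjoint.contDiff)
  have hempty : Ω ∩ tsupport (fun s => ψ (A.adjoint s)) = ∅ :=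
    eq_empty_of_forall_notMem fun s hs => eq_empty_iff_forall_notMem.1 hd (A.adjoint s)
      ⟨tsupport_comp_subset_preimage ψ A.adjoint.continuous hs.2, hI s hs.1⟩
  rw [hempty] at h
  exact h.eq_zero x

end MemBernstein

/-! ### Entire extension and Bernstein inequality -/

section HolomorphicIntegral

variable {α E : Type*} [MeasurableSpace α] {μ : Measure α} [NormedAddCommGroup E]
  [NormedSpace ℂ E]

lemma aestronglyMeasurable_deriv_of_differentiableAt {F : ℂ → α → E} {z₀ : ℂ}
    (hmeas : ∀ᶠ z in 𝓝 z₀, AEStronglyMeasurable (F z) μ)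
    (hdiff : ∀ t, DifferentiableAt ℂ (F · t) z₀) :
    AEStronglyMeasurable (fun t => deriv (F · t) z₀) μ := by
  obtain ⟨w, hw⟩ := exists_seq_tendsto (𝓝[≠] z₀)
  have hslope : ∀ᶠ n in atTop, AEStronglyMeasurable (fun t => slope (F · t) z₀ (w n)) μ := by
    filter_upwards [(hw.mono_right nhdsWithin_le_nhds).eventually hmeas] with n hn
    simp only [slope_def_module]
    exact (hn.sub hmeas.self_of_nhds).const_smul _
  obtain ⟨N, hN⟩ := eventually_atTop.1 hslope
  refine aestronglyMeasurable_of_tendsto_ae atTop (fun n => hN (n + N) (Nat.le_add_left N n))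
    (ae_of_all μ fun t => ?_)
  exact (hdiff t).hasDerivAt.tendsto_slope.comp (hw.comp (tendsto_add_atTop_nat N))

lemma differentiableAt_integral_of_dominated {F : ℂ → α → E} {bound : α → ℝ} {z₀ : ℂ} {r : ℝ}
    (hr : 0 < r) (hmeas : ∀ z ∈ ball z₀ r, AEStronglyMeasurable (F z) μ)
    (hdiff : ∀ t, DifferentiableOn ℂ (F · t) (ball z₀ r))
    (hbound : ∀ z ∈ ball z₀ r, ∀ t, ‖F z t‖ ≤ bound t) (hint : Integrable bound μ) :
    DifferentiableAt ℂ (fun z => ∫ t, F z t ∂μ) z₀ := by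
  have hmeas' : ∀ᶠ z in 𝓝 z₀, AEStronglyMeasurable (F z) μ :=
    eventually_of_mem (ball_mem_nhds z₀ hr) hmeas
  have hsub : ∀ z ∈ ball z₀ (r / 2), closedBall z (r / 4) ⊆ ball z₀ r := fun z hz =>
    (closedBall_subset_ball (by linarith)).trans
      (ball_subset_ball' (by linarith [mem_ball.1 hz] : r / 2 + dist z z₀ ≤ r))
  have hdiffAt : ∀ z ∈ ball z₀ (r / 2), ∀ t, DifferentiableAt ℂ (F · t) z := fun z hz t =>
    (hdiff t).differentiableAt (isOpen_ball.mem_nhds (ball_subset_ball (by linarith) hz))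
  have hcauchy : ∀ t, ∀ z ∈ ball z₀ (r / 2), ‖deriv (F · t) z‖ ≤ bound t / (r / 4) :=
    fun t z hz => Complex.norm_deriv_le_of_forall_mem_sphere_norm_le (by linarith)
      ((hdiff t).diffContOnCl_ball (hsub z hz))
      fun w hw => hbound w (hsub z hz (sphere_subset_closedBall hw)) t
  have hz₀ : z₀ ∈ ball z₀ (r / 2) := mem_ball_self (by linarith)
  exact (hasDerivAt_integral_of_dominated_loc_of_deriv_le (F' := fun z t => deriv (F · t) z)
    (ball_mem_nhds z₀ (by linarith)) hmeas'
    (hint.mono' hmeas'.self_of_nhds (ae_of_all μ (hbound z₀ (mem_ball_self hr))))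
    (aestronglyMeasurable_deriv_of_differentiableAt hmeas' (hdiffAt z₀ hz₀)) (ae_of_all μ hcauchy)
    (hint.div_const _)
    (ae_of_all μ fun t z hz => (hdiffAt z hz t).hasDerivAt)).2.differentiableAt

end HolomorphicIntegral

lemma exists_isTestFunction_tsupport_subset_closedBall {E : Type*} [NormedAddCommGroup E]
    [InnerProductSpace ℝ E] [FiniteDimensional ℝ E] (c : E) {r R : ℝ} (hr : 0 ≤ r) (hR : r < R) :
    ∃ χ : E → ℂ, IsTestFunction χ ∧ tsupport χ ⊆ closedBall c R ∧
      tsupport (fun s => 1 - χ s) ∩ closedBall c r = ∅ := by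
  let b : ContDiffBump c := ⟨(r + R) / 2, R, by linarith, by linarith⟩
  refine ⟨fun s => b s, .ofReal b.contDiff b.hasCompactSupport,
    (tsupport_comp_subset Complex.ofReal_zero b).trans b.tsupport_eq.subset, ?_⟩
  have hsub : tsupport (fun s => 1 - (b s : ℂ)) ⊆ (ball c ((r + R) / 2))ᶜ := by
    refine closure_minimal (fun s hs hs' => hs ?_) isOpen_ball.isClosed_compl
    simp [b.one_of_mem_closedBall (ball_subset_closedBall hs')]
  exact subset_empty_iff.1 fun s hs =>
    hsub hs.1 (closedBall_subset_ball (by linarith) hs.2)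

/-- The Fourier–Laplace transform `w ↦ ∫ φ(s) e^{-2πisw} ds`, which extends `𝓕 φ` from `ℝ` to an
entire function when `φ` is a test function. -/
def fourierLaplace (φ : ℝ → ℂ) (w : ℂ) : ℂ :=
  ∫ s : ℝ, φ s * Complex.exp (-(2 * Real.pi * s * Complex.I) * w)

lemma fourierLaplace_ofReal (φ : ℝ → ℂ) (t : ℝ) : fourierLaplace φ t = 𝓕 φ t := by
  rw [fourierLaplace, Real.fourier_eq']
  congr 1 with s
  rw [smul_eq_mul, mul_comm]
  congr 2
  simp only [RCLike.inner_apply, conj_trivial, Complex.ofReal_mul, Complex.ofReal_neg,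
    Complex.ofReal_ofNat]
  ring

namespace IsTestFunction

variable {φ : ℝ → ℂ} {τ : ℝ}

protected lemma deriv (hφ : IsTestFunction φ) : IsTestFunction (deriv φ) :=
  ⟨(contDiff_infty_iff_deriv.1 hφ.contDiff).2, hφ.hasCompactSupport.deriv⟩

lemma integrable_mul_cexp (hφ : IsTestFunction φ) (w : ℂ) :
    Integrable (fun s : ℝ => φ s * Complex.exp (-(2 * Real.pi * s * Complex.I) * w)) := by
  have := hφ.contDiff.continuous
  exact Continuous.integrable_of_hasCompactSupport (by fun_prop) hφ.hasCompactSupport.mul_right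

lemma norm_mul_cexp_le (hτ : tsupport φ ⊆ closedBall 0 τ) (s : ℝ) (w : ℂ) :
    ‖φ s * Complex.exp (-(2 * Real.pi * s * Complex.I) * w)‖
      ≤ ‖φ s‖ * Real.exp (2 * Real.pi * τ * |w.im|) := by
  by_cases hs : φ s = 0
  · simp [hs]
  have hsτ : |s| ≤ τ := mem_closedBall_zero_iff.1 (hτ (subset_tsupport φ hs))
  have him : s * w.im ≤ τ * |w.im| := (le_abs_self _).trans (by rw [abs_mul]; gcongr)
  have hre : (-(2 * Real.pi * s * Complex.I) * w).re = 2 * Real.pi * (s * w.im) := by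
    simp [mul_assoc]
  rw [norm_mul, Complex.norm_exp, hre, mul_assoc (2 * Real.pi)]
  gcongr

lemma norm_fourierLaplace_le (hφ : IsTestFunction φ) (hτ : tsupport φ ⊆ closedBall 0 τ) (w : ℂ) :
    ‖fourierLaplace φ w‖ ≤ (∫ s, ‖φ s‖) * Real.exp (2 * Real.pi * τ * |w.im|) := by
  rw [← integral_mul_const]
  exact norm_integral_le_of_norm_le (hφ.integrable.norm.mul_const _)
    (ae_of_all _ fun s => norm_mul_cexp_le hτ s w)

lemma fourierLaplace_deriv (hφ : IsTestFunction φ) (w : ℂ) :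
    fourierLaplace (deriv φ) w = 2 * Real.pi * Complex.I * w * fourierLaplace φ w := by
  have he : ∀ s : ℝ, HasDerivAt (fun s : ℝ => Complex.exp (-(2 * Real.pi * s * Complex.I) * w))
      (-(2 * Real.pi * Complex.I * w) * Complex.exp (-(2 * Real.pi * s * Complex.I) * w)) s := by
    intro s
    have h := ((Complex.ofRealCLM.hasDerivAt (x := s)).const_mul
      (-(2 * Real.pi * Complex.I * w))).cexp
    refine (h.congr_of_eventuallyEq (Eventually.of_forall fun s => ?_)).congr_deriv ?_ <;>
    · simp only [Complex.ofRealCLM_apply, Complex.ofReal_one]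
      ring_nf
  have h := integral_mul_deriv_eq_deriv_mul_of_integrable (u := φ) (u' := deriv φ)
    (fun s _ => (hφ.contDiff.differentiable (by simp) s).hasDerivAt) (fun s _ => he s)
    (((hφ.integrable_mul_cexp w).const_mul (-(2 * Real.pi * Complex.I * w))).congr
      (ae_of_all _ fun s => mul_left_comm _ _ _))
    (hφ.deriv.integrable_mul_cexp w) (hφ.integrable_mul_cexp w)
  rw [fourierLaplace, fourierLaplace, ← integral_const_mul, ← neg_eq_iff_eq_neg.2 h,
    ← integral_neg]
  congr 1 with s
  ring

lemma exists_norm_fourierLaplace_le (hφ : IsTestFunction φ) (hτ : tsupport φ ⊆ closedBall 0 τ) :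
    ∃ C ≥ 0, ∀ w, ‖fourierLaplace φ w‖
      ≤ C * Real.exp (2 * Real.pi * τ * |w.im|) * (1 + w.re ^ 2)⁻¹ := by
  have hτ'' : tsupport (deriv (deriv φ)) ⊆ closedBall 0 τ :=
    ((tsupport_deriv_subset (𝕜 := ℝ)).trans (tsupport_deriv_subset (𝕜 := ℝ))).trans hτ
  refine ⟨(∫ s, ‖φ s‖) + ∫ s, ‖deriv (deriv φ) s‖, by positivity, fun w => ?_⟩
  have h0 := hφ.norm_fourierLaplace_le hτ w
  have h2 := hφ.deriv.deriv.norm_fourierLaplace_le hτ'' w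
  rw [hφ.deriv.fourierLaplace_deriv, hφ.fourierLaplace_deriv, ← mul_assoc, norm_mul] at h2
  have hw : w.re ^ 2 ≤ ‖2 * Real.pi * Complex.I * w * (2 * Real.pi * Complex.I * w)‖ := by
    have hpi : 1 ≤ 2 * Real.pi := by linarith [Real.pi_gt_three]
    calc w.re ^ 2 = 1 * |w.re| * (1 * |w.re|) := by rw [← sq_abs]; ring
      _ ≤ 2 * Real.pi * ‖w‖ * (2 * Real.pi * ‖w‖) := by
        gcongr <;> exact Complex.abs_re_le_norm w
      _ = _ := by simp [abs_of_pos Real.pi_pos]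
  rw [← div_eq_mul_inv, le_div_iff₀ (by positivity), add_mul]
  linarith [mul_le_mul_of_nonneg_right hw (norm_nonneg (fourierLaplace φ w))]

lemma differentiable_fourierLaplace (hφ : IsTestFunction φ) :
    Differentiable ℂ (fourierLaplace φ) := by
  intro w
  obtain ⟨τ, hτ⟩ := hφ.hasCompactSupport.isCompact.isBounded.subset_closedBall 0
  refine differentiableAt_integral_of_dominated one_pos
    (fun z _ => (hφ.integrable_mul_cexp z).aestronglyMeasurable) (fun s => by fun_prop)
    (bound := fun s => ‖φ s‖ * Real.exp (2 * Real.pi * |τ| * (|w.im| + 1)))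
    (fun z hz s => ?_) (hφ.integrable.norm.mul_const _)
  have him : |z.im| ≤ |w.im| + 1 := by
    have h1 : |z.im - w.im| ≤ ‖z - w‖ := Complex.abs_im_le_norm (z - w)
    linarith [mem_ball_iff_norm.1 hz, abs_sub_abs_le_abs_sub z.im w.im]
  refine (norm_mul_cexp_le (hτ.trans (closedBall_subset_closedBall (le_abs_self τ))) s z).trans ?_
  gcongr

end IsTestFunction

section Convolution

variable {f : ℝ → ℂ} {K : ℂ → ℂ} {G C a : ℝ}

lemma norm_mul_comp_sub_le (hG : ∀ t, ‖f t‖ ≤ G)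
    (hC : ∀ w, ‖K w‖ ≤ C * Real.exp (a * |w.im|) * (1 + w.re ^ 2)⁻¹) (z : ℂ) (t : ℝ) :
    ‖f t * K (t - z)‖ ≤ G * (C * Real.exp (a * |z.im|) * (1 + (t - z.re) ^ 2)⁻¹) := by
  have hG0 : 0 ≤ G := (norm_nonneg _).trans (hG t)
  rw [norm_mul]
  gcongr
  · exact hG t
  · simpa only [Complex.sub_im, Complex.ofReal_im, zero_sub, abs_neg, Complex.sub_re,
      Complex.ofReal_re] using hC (t - z)

lemma norm_integral_mul_comp_sub_le (hG : ∀ t, ‖f t‖ ≤ G)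
    (hC : ∀ w, ‖K w‖ ≤ C * Real.exp (a * |w.im|) * (1 + w.re ^ 2)⁻¹) (z : ℂ) :
    ‖∫ t : ℝ, f t * K (t - z)‖ ≤ C * Real.pi * G * Real.exp (a * |z.im|) := by
  refine (norm_integral_le_of_norm_le
    (((integrable_inv_one_add_sq.comp_sub_right z.re).const_mul _).const_mul G)
    (ae_of_all _ (norm_mul_comp_sub_le hG hC z))).trans_eq ?_
  rw [integral_const_mul, integral_const_mul,
    integral_sub_right_eq_self (fun t : ℝ => (1 + t ^ 2)⁻¹), integral_univ_inv_one_add_sq]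
  ring

lemma differentiable_integral_mul_comp_sub (hf : Continuous f) (hG : ∀ t, ‖f t‖ ≤ G)
    (hK : Differentiable ℂ K) (ha : 0 ≤ a) (hC0 : 0 ≤ C)
    (hC : ∀ w, ‖K w‖ ≤ C * Real.exp (a * |w.im|) * (1 + w.re ^ 2)⁻¹) :
    Differentiable ℂ (fun z => ∫ t : ℝ, f t * K (t - z)) := by
  intro z
  have hK' := hK.continuous
  refine differentiableAt_integral_of_dominated one_pos
    (bound := fun t => G * (C * Real.exp (a * (|z.im| + 1)) * (3 * (1 + (t - z.re) ^ 2)⁻¹)))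
    (fun w _ => Continuous.aestronglyMeasurable (by fun_prop)) (fun t => by fun_prop)
    (fun w hw t => (norm_mul_comp_sub_le hG hC w t).trans ?_)
    ((((integrable_inv_one_add_sq.comp_sub_right z.re).const_mul 3).const_mul _).const_mul G)
  have hG0 : 0 ≤ G := (norm_nonneg _).trans (hG 0)
  have hwz : ‖w - z‖ < 1 := mem_ball_iff_norm.1 hw
  have him : |w.im| ≤ |z.im| + 1 := by
    have h : |w.im - z.im| ≤ ‖w - z‖ := Complex.abs_im_le_norm (w - z)
    linarith [abs_sub_abs_le_abs_sub w.im z.im]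
  have hre : (1 + (t - w.re) ^ 2)⁻¹ ≤ 3 * (1 + (t - z.re) ^ 2)⁻¹ := by
    have h : |w.re - z.re| ≤ 1 := (Complex.abs_re_le_norm (w - z)).trans hwz.le
    rw [inv_le_iff_one_le_mul₀ (by positivity), ← div_eq_mul_inv, div_mul_eq_mul_div,
      one_le_div (by positivity)]
    nlinarith [sq_nonneg ((t - w.re) - (w.re - z.re)), (sq_le_one_iff_abs_le_one _).2 h]
  gcongr

end Convolution

/-- The extension is `z ↦ ∫ f(t) Φ(t - z) dt`, where `Φ` is the Fourier–Laplace transform of a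
test function equal to `1` near `[-σ, σ]` and supported in `[-τ, τ]`. -/
lemma MemBernstein.exists_entire_extension {σ τ : ℝ} (hσ : 0 ≤ σ) (hτ : σ < τ) :
    ∃ A > 0, ∀ f : ℝ → ℂ, MemBernstein (Icc (-σ) σ) f → ∀ G, (∀ x, ‖f x‖ ≤ G) →
      ∃ F : ℂ → ℂ, Differentiable ℂ F ∧ (∀ x : ℝ, F x = f x) ∧
        ∀ z, ‖F z‖ ≤ A * G * Real.exp (2 * Real.pi * τ * |z.im|) := by
  obtain ⟨χ, hχ, hχτ, hχσ⟩ :=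
    exists_isTestFunction_tsupport_subset_closedBall (0 : ℝ) hσ hτ
  obtain ⟨C, hC0, hC⟩ := hχ.exists_norm_fourierLaplace_le hχτ
  refine ⟨(C + 1) * Real.pi, by positivity, fun f hf G hG =>
    ⟨fun z => ∫ t : ℝ, f t * fourierLaplace χ (t - z), ?_, fun x => ?_, fun z => ?_⟩⟩
  · have hτ0 : 0 ≤ τ := hσ.trans hτ.le
    exact differentiable_integral_mul_comp_sub hf.1 hG hχ.differentiable_fourierLaplace
      (by positivity) hC0 hC
  · rw [Real.closedBall_eq_Icc, zero_sub, zero_add] at hχσ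
    change ∫ t : ℝ, f t * fourierLaplace χ (t - x) = f x
    rw [← hf.integral_mul_fourier_eq_self hχ hχσ x,
      ← integral_add_left_eq_self (fun t : ℝ => f t * fourierLaplace χ (t - x)) x]
    simp only [Complex.ofReal_add, add_sub_cancel_left, fourierLaplace_ofReal]
  · have hG0 : 0 ≤ G := (norm_nonneg _).trans (hG 0)
    refine (norm_integral_mul_comp_sub_le hG hC z).trans ?_
    gcongr
    linarith

lemma MemBernstein.exists_lipschitz {σ : ℝ} (hσ : 0 ≤ σ) :
    ∃ A > 0, ∀ f : ℝ → ℂ, MemBernstein (Icc (-σ) σ) f → ∀ G, (∀ x, ‖f x‖ ≤ G) →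
      ∀ x y, ‖f x - f y‖ ≤ A * G * |x - y| := by
  obtain ⟨A, hA, hext⟩ := exists_entire_extension hσ (lt_add_one σ)
  refine ⟨A * Real.exp (2 * Real.pi * (σ + 1)), by positivity, fun f hf G hG x y => ?_⟩
  obtain ⟨F, hF, hFf, hFb⟩ := hext f hf G hG
  have hG0 : 0 ≤ G := (norm_nonneg _).trans (hG 0)
  have hderiv : ∀ t ∈ univ, ‖deriv f t‖ ≤ A * Real.exp (2 * Real.pi * (σ + 1)) * G := by
    intro t _
    have hft : HasDerivAt f (deriv F t) t := by
      simpa only [hFf] using (hF t).hasDerivAt.comp_ofReal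
    rw [hft.deriv, ← div_one (_ * G)]
    refine Complex.norm_deriv_le_of_forall_mem_sphere_norm_le one_pos hF.diffContOnCl
      fun z hz => (hFb z).trans ?_
    have him : |z.im| ≤ 1 := by
      simpa using (Complex.abs_im_le_norm (z - t)).trans (mem_sphere_iff_norm.1 hz).le
    calc A * G * Real.exp (2 * Real.pi * (σ + 1) * |z.im|)
        ≤ A * G * Real.exp (2 * Real.pi * (σ + 1)) := by
          gcongr A * G * Real.exp ?_
          exact mul_le_of_le_one_right (by positivity) him
      _ = A * Real.exp (2 * Real.pi * (σ + 1)) * G := mul_right_comm _ _ _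
  have hfd : ∀ t ∈ univ, DifferentiableAt ℝ f t := fun t _ => by
    simpa only [hFf] using (hF t).hasDerivAt.comp_ofReal.differentiableAt
  exact convex_univ.norm_image_sub_le_of_norm_deriv_le hfd hderiv (mem_univ y) (mem_univ x)

/-! ### Zero counting by Jensen's formula -/

section Jensen

variable {F : ℂ → ℂ} {c : ℂ} {R : ℝ}

lemma one_le_divisor_of_eq_zero {U : Set ℂ} (hF : AnalyticOnNhd ℂ F U) (hU : IsPreconnected U)
    (hcU : c ∈ U) (hc : F c ≠ 0) {z : ℂ} (hzU : z ∈ U) (hz : F z = 0) :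
    1 ≤ MeromorphicOn.divisor F U z := by
  have htop : analyticOrderAt F z ≠ ⊤ :=
    hF.analyticOrderAt_ne_top_of_isPreconnected hU hcU hzU
      (by simp [(hF c hcU).analyticOrderAt_eq_zero.2 hc])
  have h0 : analyticOrderAt F z ≠ 0 := (hF z hzU).analyticOrderAt_ne_zero.2 hz
  rw [MeromorphicOn.AnalyticOnNhd.divisor_apply hF hzU]
  lift analyticOrderAt F z to ℕ using htop with n
  simp only [ENat.map_natCast, WithTop.untop₀_coe]
  exact_mod_cast Nat.one_le_iff_ne_zero.2 (by simpa using h0)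

lemma divisor_mul_log_nonneg (hF : AnalyticOnNhd ℂ F (closedBall c R)) (z : ℂ) :
    0 ≤ (MeromorphicOn.divisor F (closedBall c R) z : ℝ) * Real.log (R * ‖c - z‖⁻¹) := by
  by_cases hz : z ∈ closedBall c R
  · refine mul_nonneg (mod_cast MeromorphicOn.AnalyticOnNhd.divisor_nonneg hF z) ?_
    rcases eq_or_ne c z with rfl | h
    · simp
    · rw [← div_eq_mul_inv]
      refine Real.log_nonneg ((one_le_div (norm_sub_pos_iff.2 h)).2 ?_)
      exact mem_closedBall_iff_norm'.1 hz
  · simp [Function.locallyFinsuppWithin.apply_eq_zero_of_notMem _ hz]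

lemma sum_log_div_le_circleAverage_sub (hR : 0 < R) (hF : AnalyticOnNhd ℂ F (closedBall c R))
    (hc : F c ≠ 0) {Z : Finset ℂ} (hZ : ∀ z ∈ Z, z ∈ closedBall c R) (hzero : ∀ z ∈ Z, F z = 0) :
    ∑ z ∈ Z, Real.log (R / ‖c - z‖)
      ≤ Real.circleAverage (Real.log ‖F ·‖) c R - Real.log ‖F c‖ := by
  have hFR : AnalyticOnNhd ℂ F (closedBall c |R|) := by rwa [abs_of_pos hR]
  have hJensen := hFR.circleAverage_log_norm hR.ne' hc
  rw [abs_of_pos hR] at hJensen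
  set m : ℂ → ℝ := fun z =>
    (MeromorphicOn.divisor F (closedBall c R) z : ℝ) * Real.log (R * ‖c - z‖⁻¹) with hm
  have hfin : (Function.support m).Finite := by
    refine ((MeromorphicOn.divisor F (closedBall c R)).finiteSupport
      (isCompact_closedBall c R)).subset fun z hz h => hz ?_
    simp only [hm, h, Int.cast_zero, zero_mul]
  have hsum : ∑ z ∈ Z, Real.log (R / ‖c - z‖) ≤ ∑ z ∈ Z, m z := by
    refine Finset.sum_le_sum fun z hz => ?_
    have hdiv : (1 : ℝ) ≤ MeromorphicOn.divisor F (closedBall c R) z :=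
      mod_cast one_le_divisor_of_eq_zero hF (convex_closedBall c R).isPreconnected
        (mem_closedBall_self hR.le) hc (hZ z hz) (hzero z hz)
    have hne : c ≠ z := fun h => hc (h ▸ hzero z hz)
    rw [div_eq_mul_inv]
    refine le_mul_of_one_le_left (Real.log_nonneg ?_) hdiv
    rw [← div_eq_mul_inv, one_le_div (norm_sub_pos_iff.2 hne)]
    exact mem_closedBall_iff_norm'.1 (hZ z hz)
  have hfinsum : ∑ z ∈ Z, m z ≤ ∑ᶠ z, m z := by
    classical
    rw [finsum_eq_sum_of_support_subset m (s := hfin.toFinset ∪ Z)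
      (by rw [Finset.coe_union, hfin.coe_toFinset]; exact subset_union_left)]
    exact Finset.sum_le_sum_of_subset_of_nonneg Finset.subset_union_right
      fun z _ _ => divisor_mul_log_nonneg hF z
  linarith

lemma integral_abs_sin_two_pi : ∫ θ in (0 : ℝ)..2 * Real.pi, |Real.sin θ| = 4 := by
  have hper : Function.Periodic (fun θ => |Real.sin θ|) Real.pi := fun θ => by
    simp only [Real.sin_add_pi, abs_neg]
  have hpos : ∫ θ in (0 : ℝ)..Real.pi, |Real.sin θ| = ∫ θ in (0 : ℝ)..Real.pi, Real.sin θ :=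
    intervalIntegral.integral_congr fun θ hθ => abs_of_nonneg <|
      Real.sin_nonneg_of_mem_Icc (by rwa [uIcc_of_le Real.pi_pos.le] at hθ)
  have h := hper.intervalIntegral_add_zsmul_eq 2 0
    fun a b => (by fun_prop : Continuous fun θ => |Real.sin θ|).intervalIntegrable a b
  rw [zero_add, zero_add, hpos, integral_sin, Real.cos_zero, Real.cos_pi] at h
  norm_num at h
  exact h

lemma circleAverage_abs_im_sub (c : ℂ) (R : ℝ) :
    Real.circleAverage (fun z => |(z - c).im|) c R = 2 * |R| / Real.pi := by
  have him : ∀ θ : ℝ, |(circleMap c R θ - c).im| = |R| * |Real.sin θ| := fun θ => by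
    simp [circleMap, abs_mul]
  simp only [Real.circleAverage_def, him, intervalIntegral.integral_const_mul,
    integral_abs_sin_two_pi, smul_eq_mul]
  field_simp
  ring

lemma circleAverage_log_norm_le {B a : ℝ} (hF : AnalyticOnNhd ℂ F (sphere c |R|)) (hB : 1 ≤ B)
    (ha : 0 ≤ a) (hbound : ∀ z ∈ sphere c |R|, ‖F z‖ ≤ B * Real.exp (a * |(z - c).im|)) :
    Real.circleAverage (Real.log ‖F ·‖) c R ≤ Real.log B + 2 * a * |R| / Real.pi := by
  have hint : CircleIntegrable (fun z : ℂ => a * |(z - c).im|) c R :=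
    ContinuousOn.circleIntegrable' (Continuous.continuousOn (by fun_prop))
  calc Real.circleAverage (Real.log ‖F ·‖) c R
      ≤ Real.circleAverage ((fun _ => Real.log B) + fun z => a * |(z - c).im|) c R := by
        refine Real.circleAverage_mono
          (MeromorphicOn.circleIntegrable_log_norm fun z hz => (hF z hz).meromorphicAt)
          ((circleIntegrable_const _ c R).add hint) fun z hz => ?_
        have hB0 : 0 < B := one_pos.trans_le hB
        rcases eq_or_ne (F z) 0 with h | h
        · have := Real.log_nonneg hB
          simp only [h, norm_zero, Real.log_zero, Pi.add_apply]
          positivity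
        · rw [Pi.add_apply, Real.log_le_iff_le_exp (norm_pos_iff.2 h), Real.exp_add,
            Real.exp_log hB0]
          exact hbound z hz
    _ = Real.log B + 2 * a * |R| / Real.pi := by
        rw [Real.circleAverage_add (circleIntegrable_const _ c R) hint,
          Real.circleAverage_const]
        have h := Real.circleAverage_fun_smul (a := a) (c := c) (R := R)
          (f := fun z : ℂ => |(z - c).im|)
        simp only [smul_eq_mul, circleAverage_abs_im_sub] at h
        rw [h]
        ring

end Jensen

lemma integral_indicator_inv_le_log {ρ r R : ℝ} (hρ : 0 < ρ) (hρR : ρ ≤ R) (hrR : r ≤ R) :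
    ∫ t in r..R, (Ici ρ).indicator (fun t => t⁻¹) t ≤ Real.log (R / ρ) := by
  have hint : IntervalIntegrable (fun t : ℝ => t⁻¹) volume ρ R :=
    intervalIntegral.intervalIntegrable_inv (fun x hx => by
      rw [uIcc_of_le hρR] at hx; exact (hρ.trans_le hx.1).ne') continuousOn_id
  rw [← integral_inv_of_pos hρ (hρ.trans_le hρR), intervalIntegral.integral_of_le hrR,
    intervalIntegral.integral_of_le hρR, ← integral_Icc_eq_integral_Ioc (x := ρ),
    setIntegral_indicator measurableSet_Ici]
  refine setIntegral_mono_set ?_ ?_ ?_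
  · rwa [integrableOn_Icc_iff_integrableOn_Ioc, ← intervalIntegrable_iff_integrableOn_Ioc_of_le hρR]
  · filter_upwards [ae_restrict_mem measurableSet_Icc] with t ht
    exact inv_nonneg.2 (hρ.le.trans ht.1)
  · exact Eventually.of_forall fun t ht => ⟨ht.2, ht.1.2⟩

lemma mul_sub_le_sum_log_div {ι : Type*} {Z : Finset ι} {ρ : ι → ℝ} {r R D : ℝ} (hr : 0 < r)
    (hrR : r ≤ R) (hρ : ∀ i ∈ Z, 0 < ρ i) (hρR : ∀ i ∈ Z, ρ i ≤ R)
    (hcount : ∀ t ∈ Icc r R, D * t ≤ {i ∈ Z | ρ i ≤ t}.card) :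
    D * (R - r) ≤ ∑ i ∈ Z, Real.log (R / ρ i) := by
  have hint : ∀ s : ℝ, IntervalIntegrable ((Ici s).indicator fun t : ℝ => t⁻¹) volume r R := by
    intro s
    have h := intervalIntegral.intervalIntegrable_inv (μ := volume) (f := fun t : ℝ => t)
      (a := r) (b := R) (fun x hx => by
        rw [uIcc_of_le hrR] at hx; exact (hr.trans_le hx.1).ne') continuousOn_id
    rw [intervalIntegrable_iff_integrableOn_Ioc_of_le hrR] at h ⊢
    exact h.indicator measurableSet_Ici
  calc D * (R - r) = ∫ _ in r..R, D := by
        rw [intervalIntegral.integral_const, smul_eq_mul, mul_comm]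
    _ ≤ ∫ t in r..R, ∑ i ∈ Z, (Ici (ρ i)).indicator (fun t : ℝ => t⁻¹) t := by
        refine intervalIntegral.integral_mono_on hrR intervalIntegrable_const
          (by simpa only [← Finset.sum_fn] using IntervalIntegrable.sum Z fun i _ => hint (ρ i))
          fun t ht => ?_
        simp only [indicator_apply, mem_Ici]
        rw [← Finset.sum_filter, Finset.sum_const, nsmul_eq_mul, ← div_eq_mul_inv,
          le_div_iff₀ (hr.trans_le ht.1)]
        exact hcount t ht
    _ = ∑ i ∈ Z, ∫ t in r..R, (Ici (ρ i)).indicator (fun t : ℝ => t⁻¹) t :=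
        intervalIntegral.integral_finsetSum fun i _ => hint (ρ i)
    _ ≤ ∑ i ∈ Z, Real.log (R / ρ i) := Finset.sum_le_sum fun i hi =>
        integral_indicator_inv_le_log (hρ i hi) (hρR i hi) hrR

/-- Jensen's formula turns a linear lower bound on the number of zeros around a point where `F` is
not small into a lower bound on the exponential type of `F`. -/
lemma mul_sub_le_of_exponential_type {F : ℂ → ℂ} {c : ℂ} {r R D B a : ℝ}
    (hF : Differentiable ℂ F) (hr : 0 < r) (hrR : r ≤ R) (hB : 1 ≤ B) (ha : 0 ≤ a)
    (hc : 1 ≤ ‖F c‖) (hbound : ∀ z ∈ sphere c R, ‖F z‖ ≤ B * Real.exp (a * |(z - c).im|))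
    {Z : Finset ℂ} (hZ : ∀ z ∈ Z, z ∈ closedBall c R) (hzero : ∀ z ∈ Z, F z = 0)
    (hcount : ∀ t ∈ Icc r R, D * t ≤ {z ∈ Z | ‖c - z‖ ≤ t}.card) :
    D * (R - r) ≤ Real.log B + 2 * a * R / Real.pi := by
  have hR : 0 < R := hr.trans_le hrR
  have hF' : ∀ s, AnalyticOnNhd ℂ F s := fun s z _ => hF.analyticAt z
  have hc0 : F c ≠ 0 := norm_pos_iff.1 (one_pos.trans_le hc)
  rw [← abs_of_pos hR] at hbound
  calc D * (R - r) ≤ ∑ z ∈ Z, Real.log (R / ‖c - z‖) :=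
        mul_sub_le_sum_log_div hr hrR
          (fun z hz => norm_sub_pos_iff.2 fun h => hc0 (h ▸ hzero z hz))
          (fun z hz => mem_closedBall_iff_norm'.1 (hZ z hz)) hcount
    _ ≤ Real.circleAverage (Real.log ‖F ·‖) c R - Real.log ‖F c‖ :=
        sum_log_div_le_circleAverage_sub hR (hF' _) hc0 hZ hzero
    _ ≤ Real.circleAverage (Real.log ‖F ·‖) c R := sub_le_self _ (Real.log_nonneg hc)
    _ ≤ Real.log B + 2 * a * R / Real.pi := by
        simpa only [abs_of_pos hR] using circleAverage_log_norm_le (hF' _) hB ha hbound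

lemma norm_eval_interpolate_le {𝕜 ι : Type*} [NormedField 𝕜] [DecidableEq ι] {Z : Finset ι}
    {v g : ι → 𝕜} {z : 𝕜} {δ ρ M : ℝ} {N : ℕ} (hδ : 0 < δ) (hρ : 0 ≤ ρ) (hM : 0 ≤ M)
    (hN : Z.card ≤ N) (hsep : ∀ i ∈ Z, ∀ j ∈ Z, i ≠ j → δ ≤ ‖v i - v j‖)
    (hz : ∀ i ∈ Z, ‖z - v i‖ ≤ ρ) (hg : ∀ i ∈ Z, ‖g i‖ ≤ M) :
    ‖(Lagrange.interpolate Z v g).eval z‖ ≤ N * (ρ / δ + 1) ^ N * M := by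
  have hb : 1 ≤ ρ / δ + 1 := le_add_of_nonneg_left (by positivity)
  have hbasis : ∀ i ∈ Z, ‖(Lagrange.basis Z v i).eval z‖ ≤ (ρ / δ + 1) ^ N := by
    intro i hi
    rw [Lagrange.basis, Polynomial.eval_prod, norm_prod]
    calc ∏ j ∈ Z.erase i, ‖(Lagrange.basisDivisor (v i) (v j)).eval z‖
        ≤ ∏ _j ∈ Z.erase i, (ρ / δ + 1) := by
          refine Finset.prod_le_prod (fun _ _ => norm_nonneg _) fun j hj => ?_
          have hj' := Finset.mem_of_mem_erase hj
          simp only [Lagrange.basisDivisor, Polynomial.eval_mul, Polynomial.eval_C,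
            Polynomial.eval_sub, Polynomial.eval_X, norm_mul, norm_inv]
          rw [← div_eq_inv_mul]
          refine le_trans ?_ (lt_add_one _).le
          gcongr
          exacts [hz j hj', hsep i hi j hj' (Finset.ne_of_mem_erase hj).symm]
      _ ≤ (ρ / δ + 1) ^ N := by
          rw [Finset.prod_const]
          exact pow_le_pow_right₀ hb ((Finset.card_le_card (Finset.erase_subset i Z)).trans hN)
  rw [Lagrange.interpolate_apply, Polynomial.eval_finsetSum]
  calc ‖∑ i ∈ Z, (Polynomial.C (g i) * Lagrange.basis Z v i).eval z‖
      ≤ ∑ _i ∈ Z, M * (ρ / δ + 1) ^ N := by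
        refine norm_sum_le_of_le Z fun i hi => ?_
        rw [Polynomial.eval_mul, Polynomial.eval_C, norm_mul]
        exact mul_le_mul (hg i hi) (hbasis i hi) (norm_nonneg _) hM
    _ ≤ N * (ρ / δ + 1) ^ N * M := by
        rw [Finset.sum_const, nsmul_eq_mul, mul_comm M, ← mul_assoc]
        gcongr

/-! ### Beurling's sampling theorem -/

lemma isSamplingSet_iff {Ω P : Set V} :
    IsSamplingSet Ω P ↔ ∃ C > 0, ∀ f, MemBernstein Ω f → ∀ M ≥ 0, (∀ p ∈ P, ‖f p‖ ≤ M) →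
      ∀ x, ‖f x‖ ≤ C * M := by
  refine exists_congr fun C => and_congr_right fun hC => forall₂_congr fun f hf =>
    ⟨fun h M hM hP x => (h x).trans ?_, fun h => h _ (Real.sSup_nonneg ?_) fun p hp => ?_⟩
  · gcongr
    exact Real.sSup_le (by rintro _ ⟨p, hp, rfl⟩; exact hP p hp) hM
  · rintro _ ⟨p, -, rfl⟩
    exact norm_nonneg _
  · obtain ⟨K, hK⟩ := hf.2.1
    exact le_csSup ⟨K, by rintro _ ⟨x, -, rfl⟩; exact hK x⟩ ⟨p, hp, rfl⟩

section Density

variable {H : Set ℝ}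

lemma UniformlyDiscrete.exists_ncard_inter_closedBall_le (hH : UniformlyDiscrete H) :
    ∃ δ > 0, ∀ r ≥ 0, ∀ x, (H ∩ closedBall x r).Finite ∧
      ((H ∩ closedBall x r).ncard : ℝ) ≤ 2 * r / δ + 2 := by
  obtain ⟨δ, hδ, hsep⟩ := hH
  refine ⟨δ, hδ, fun r hr x => ?_⟩
  have hmaps : MapsTo (fun t : ℝ => ⌊(t - x) / δ⌋) (H ∩ closedBall x r)
      (Finset.Icc ⌊-r / δ⌋ ⌊r / δ⌋ : Finset ℤ) := by
    rintro t ⟨-, ht⟩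
    rw [mem_closedBall, Real.dist_eq, abs_le] at ht
    rw [Finset.coe_Icc]
    exact ⟨Int.floor_mono (by gcongr; exact ht.1), Int.floor_mono (by gcongr; exact ht.2)⟩
  have hinj : InjOn (fun t : ℝ => ⌊(t - x) / δ⌋) (H ∩ closedBall x r) := by
    intro s hs t ht hst
    by_contra hne
    have hlt := Int.abs_sub_lt_one_of_floor_eq_floor hst
    rw [← sub_div, sub_sub_sub_cancel_right, abs_div, abs_of_pos hδ, div_lt_one hδ] at hlt
    exact hlt.not_ge (hsep s hs.1 t ht.1 hne)
  refine ⟨Set.Finite.of_injOn hmaps hinj (Finset.finite_toSet _), ?_⟩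
  have hfloor : ⌊-r / δ⌋ ≤ ⌊r / δ⌋ := Int.floor_mono (by gcongr; linarith)
  calc ((H ∩ closedBall x r).ncard : ℝ)
      ≤ (Finset.Icc ⌊-r / δ⌋ ⌊r / δ⌋).card := by
        rw [← Set.ncard_coe_finset]
        exact_mod_cast Set.ncard_le_ncard_of_injOn _ hmaps hinj (Finset.finite_toSet _)
    _ = ⌊r / δ⌋ + 1 - ⌊-r / δ⌋ := by
        exact_mod_cast Int.card_Icc_of_le _ _ (by lia)
    _ ≤ 2 * r / δ + 2 := by
        rw [neg_div, mul_div_assoc]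
        linarith [Int.floor_le (r / δ), Int.lt_floor_add_one (-(r / δ))]

lemma exists_le_ncard_of_lt_lowerUniformDensity {D : ℝ} (h : D < lowerUniformDensity H) :
    ∃ r₀ > 0, ∀ r ≥ r₀, ∀ x, D * (2 * r) ≤ (H ∩ closedBall x r).ncard := by
  have hnn : ∀ r x : ℝ, 0 ≤ (Nat.card ↥(H ∩ closedBall x r) : ℝ) /
      (volume (closedBall x r)).toReal := fun r x => by positivity
  obtain ⟨r₀, hr₀⟩ := eventually_atTop.1 <| eventually_lt_of_lt_liminf h
    (isBoundedUnder_of ⟨0, fun r => Real.iInf_nonneg (hnn r)⟩)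
  refine ⟨max r₀ 1, by positivity, fun r hr x => ?_⟩
  have hr0 : 0 < r := lt_of_lt_of_le (by positivity) hr
  have hx := (hr₀ r ((le_max_left _ _).trans hr)).le.trans
    (ciInf_le ⟨0, by rintro _ ⟨y, rfl⟩; exact hnn r y⟩ x)
  rwa [Real.volume_closedBall, ENNReal.toReal_ofReal (by positivity),
    le_div_iff₀ (by positivity)] at hx

lemma UniformlyDiscrete.le_lowerUniformDensity {D r₀ : ℝ} (hH : UniformlyDiscrete H)
    (h : ∀ r ≥ r₀, ∀ x, D * (2 * r) ≤ (H ∩ closedBall x r).ncard) :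
    D ≤ lowerUniformDensity H := by
  obtain ⟨δ, -, hupper⟩ := hH.exists_ncard_inter_closedBall_le
  refine le_liminf_of_le (IsBoundedUnder.isCoboundedUnder_ge
    (isBoundedUnder_of_eventually_le (a := 1 / δ + 1) ?_)) ?_
  · filter_upwards [eventually_ge_atTop 1] with r hr
    refine (ciInf_le ⟨0, by rintro _ ⟨y, rfl⟩; positivity⟩ 0).trans ?_
    rw [Real.volume_closedBall, ENNReal.toReal_ofReal (by positivity),
      div_le_iff₀ (by positivity)]
    calc ((H ∩ closedBall 0 r).ncard : ℝ) ≤ 2 * r / δ + 2 := (hupper r (by positivity) 0).2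
      _ ≤ (1 / δ + 1) * (2 * r) := by
        rw [add_mul, one_mul, div_mul_eq_mul_div, one_mul]
        linarith
  · filter_upwards [eventually_gt_atTop 0, eventually_ge_atTop r₀] with r hr hr₀
    refine le_ciInf fun x => ?_
    rw [Real.volume_closedBall, ENNReal.toReal_ofReal (by positivity),
      le_div_iff₀ (by positivity)]
    exact h r hr₀ x

lemma UniformlyDiscrete.lowerUniformDensity_nonneg (hH : UniformlyDiscrete H) :
    0 ≤ lowerUniformDensity H :=
  hH.le_lowerUniformDensity (r₀ := 0) fun r _ x => by rw [zero_mul]; positivity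

end Density

section Beurling

variable {F Q : ℂ → ℂ} {A G M a r R D δ : ℝ}

lemma mul_sub_le_of_eq_on_nodes {c : ℂ} (hF : Differentiable ℂ F) (hQ : Differentiable ℂ Q)
    (hA : 0 ≤ A) (hG : 0 < G) (ha : 0 ≤ a) (hr : 0 < r) (hrR : r ≤ R) (hFc : G / 2 < ‖F c‖)
    (hFb : ∀ z, ‖F z‖ ≤ A * G * Real.exp (a * |(z - c).im|))
    (hQb : ∀ z ∈ closedBall c R, ‖Q z‖ ≤ G / 4) {Z : Finset ℂ} (hZ : ∀ z ∈ Z, z ∈ closedBall c R)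
    (hFQ : ∀ z ∈ Z, F z = Q z) (hcount : ∀ t ∈ Icc r R, D * t ≤ {z ∈ Z | ‖c - z‖ ≤ t}.card) :
    D * (R - r) ≤ Real.log (4 * (A + 1)) + 2 * a * R / Real.pi := by
  have hnorm : ∀ z, ‖(4 / G : ℂ) * (F z - Q z)‖ = 4 * ‖F z - Q z‖ / G := fun z => by
    rw [norm_mul, norm_div, Complex.norm_real, Real.norm_of_nonneg hG.le, Complex.norm_ofNat,
      div_mul_eq_mul_div]
  refine mul_sub_le_of_exponential_type (F := fun z => (4 / G : ℂ) * (F z - Q z))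
    ((hF.sub hQ).const_mul _) hr hrR (by linarith) ha ?_ (fun z hz => ?_) hZ
    (fun z hz => by rw [hFQ z hz, sub_self, mul_zero]) hcount
  · rw [hnorm, one_le_div hG]
    linarith [norm_sub_norm_le (F c) (Q c), hQb c (mem_closedBall_self (hr.le.trans hrR))]
  · rw [hnorm, div_le_iff₀ hG]
    have hexp : 1 ≤ Real.exp (a * |(z - c).im|) := Real.one_le_exp (by positivity)
    calc 4 * ‖F z - Q z‖
        ≤ 4 * (A * G * Real.exp (a * |(z - c).im|) + G / 4) := by
          gcongr
          exact (norm_sub_le _ _).trans (add_le_add (hFb z) (hQb z (sphere_subset_closedBall hz)))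
      _ ≤ 4 * (A + 1) * Real.exp (a * |(z - c).im|) * G := by nlinarith

lemma mul_sub_le_of_norm_le_on {H : Set ℝ} {N : ℕ} {x₀ : ℝ} (hF : Differentiable ℂ F)
    (hA : 0 ≤ A) (hG : 0 < G) (hM : 0 ≤ M) (ha : 0 ≤ a) (hr : 0 < r) (hrR : r ≤ R) (hδ : 0 < δ)
    (hFb : ∀ z, ‖F z‖ ≤ A * G * Real.exp (a * |z.im|)) (hF₀ : G / 2 < ‖F x₀‖)
    (hFH : ∀ x ∈ H, ‖F x‖ ≤ M) (hsep : ∀ x ∈ H, ∀ y ∈ H, x ≠ y → δ ≤ dist x y)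
    (hfin : (H ∩ closedBall x₀ R).Finite) (hN : (H ∩ closedBall x₀ R).ncard ≤ N)
    (hNG : N * (2 * R / δ + 1) ^ N * M ≤ G / 4)
    (hcount : ∀ t ∈ Icc r R, D * t ≤ (H ∩ closedBall x₀ t).ncard) :
    D * (R - r) ≤ Real.log (4 * (A + 1)) + 2 * a * R / Real.pi := by
  let Z : Finset ℂ := hfin.toFinset.map ⟨_, Complex.ofReal_injective⟩
  have hmem : ∀ {z}, z ∈ Z ↔ ∃ x, (x ∈ H ∧ dist x x₀ ≤ R) ∧ (x : ℂ) = z := by simp [Z]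
  have hZball : ∀ z ∈ Z, z ∈ closedBall (x₀ : ℂ) R := fun z hz => by
    obtain ⟨x, hx, rfl⟩ := hmem.1 hz
    exact (Complex.isometry_ofReal.dist_eq x x₀).trans_le hx.2
  refine mul_sub_le_of_eq_on_nodes (Z := Z) (c := x₀) hF
    (Lagrange.interpolate Z id F).differentiable hA hG ha hr hrR hF₀ (by simpa using hFb)
    (fun z hz => le_trans ?_ hNG) hZball
    (fun z hz => (Lagrange.eval_interpolate_at_node F (injOn_id _) hz).symm) fun t ht => ?_
  · refine norm_eval_interpolate_le hδ (by linarith) hM ?_ ?_ (fun w hw => ?_) ?_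
    · rwa [Finset.card_map, ← Set.ncard_eq_toFinset_card _ hfin]
    · intro z hz w hw hne
      obtain ⟨x, hx, rfl⟩ := hmem.1 hz
      obtain ⟨y, hy, rfl⟩ := hmem.1 hw
      rw [id, id, ← dist_eq_norm, Complex.isometry_ofReal.dist_eq]
      exact hsep x hx.1 y hy.1 (by rintro rfl; exact hne rfl)
    · rw [← dist_eq_norm, two_mul]
      exact (dist_triangle_right _ _ _).trans (add_le_add hz (hZball w hw))
    · intro z hz
      obtain ⟨x, hx, rfl⟩ := hmem.1 hz
      exact hFH x hx.1
  · refine (hcount t ht).trans (Nat.cast_le.2 ?_)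
    rw [← Set.ncard_coe_finset]
    refine Set.ncard_le_ncard_of_injOn ((↑) : ℝ → ℂ) (fun x hx => ?_)
      Complex.ofReal_injective.injOn (Finset.finite_toSet _)
    rw [Finset.mem_coe, Finset.mem_filter, hmem, ← dist_eq_norm, Complex.isometry_ofReal.dist_eq,
      dist_comm]
    exact ⟨⟨x, ⟨hx.1, (mem_closedBall.1 hx.2).trans ht.2⟩, rfl⟩, hx.2⟩

theorem UniformlyDiscrete.isSamplingSet_of_lt_lowerUniformDensity {H : Set ℝ}
    (hH : UniformlyDiscrete H) {σ : ℝ} (hσ : 0 ≤ σ) (hd : 2 * σ < lowerUniformDensity H) :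
    IsSamplingSet (Icc (-σ) σ) H := by
  obtain ⟨D, hσD, hDH⟩ := exists_between hd
  obtain ⟨τ, hστ, hτD⟩ := exists_between (show σ < D / 2 by linarith)
  obtain ⟨r, hr, hcount⟩ := exists_le_ncard_of_lt_lowerUniformDensity hDH
  obtain ⟨A, hA, hext⟩ := MemBernstein.exists_entire_extension hσ hστ
  obtain ⟨δ, hδ, hsep⟩ := id hH
  obtain ⟨R, hlarge, hrR⟩ : ∃ R, Real.log (4 * (A + 1)) + 2 * D * r < (2 * D - 4 * τ) * R ∧
      r ≤ R :=
    ((tendsto_id.const_mul_atTop (by linarith)).eventually_gt_atTop _ |>.and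
      (eventually_ge_atTop r)).exists
  obtain ⟨δ', -, hcard⟩ := hH.exists_ncard_inter_closedBall_le
  specialize hcard R (hr.le.trans hrR)
  set N := ⌊2 * R / δ' + 2⌋₊
  set L : ℝ := N * (2 * R / δ + 1) ^ N
  have hL : 0 ≤ L := by have := hr.trans_le hrR; positivity
  refine isSamplingSet_iff.2 ⟨4 * (L + 1), by positivity, fun f hf M hM hfM => ?_⟩
  by_contra! hcon
  obtain ⟨x₁, hx₁⟩ := hcon
  have hbdd : BddAbove (range (‖f ·‖)) := hf.2.1.imp fun K hK => by rintro _ ⟨x, rfl⟩; exact hK x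
  set G := ⨆ x, ‖f x‖
  have hfG : ∀ x, ‖f x‖ ≤ G := le_ciSup hbdd
  have hGM : 4 * (L + 1) * M < G := hx₁.trans_le (hfG x₁)
  have hG : 0 < G := lt_of_le_of_lt (by positivity) hGM
  obtain ⟨x₀, hx₀⟩ : ∃ x₀, G / 2 < ‖f x₀‖ := exists_lt_of_lt_ciSup (half_lt_self hG)
  obtain ⟨F, hF, hFf, hFb⟩ := hext f hf G hfG
  have hbound : 2 * D * (R - r) ≤ _ :=
    mul_sub_le_of_norm_le_on hF hA.le hG hM (by have := hσ.trans hστ.le; positivity) hr hrR hδ hFb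
      (by rwa [hFf]) (by simpa only [hFf] using hfM) hsep (hcard x₀).1
      (Nat.le_floor (hcard x₀).2)
      (show L * M ≤ G / 4 by linarith) fun t ht => (by linarith [hcount t ht.1 x₀])
  have hπ : 2 * (2 * Real.pi * τ) * R / Real.pi = 4 * τ * R := by
    field_simp
    ring
  linarith

end Beurling

/-! ### Trigonometric limits -/

/-- Trigonometric sums on the line with frequencies in `[-σ, σ]`. -/
def trigSpan (σ : ℝ) : Submodule ℂ (ℝ → ℂ) :=
  Submodule.span ℂ ((fun s x : ℝ => (𝐞 (s * x) : ℂ)) '' {s | |s| ≤ σ})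

section TrigSpan

variable {σ τ : ℝ} {f g : ℝ → ℂ}

lemma fourierChar_mem_trigSpan {s : ℝ} (hs : |s| ≤ σ) :
    (fun x : ℝ => (𝐞 (s * x) : ℂ)) ∈ trigSpan σ :=
  Submodule.subset_span ⟨s, hs, rfl⟩

lemma trigSpan_mono (h : σ ≤ τ) : trigSpan σ ≤ trigSpan τ :=
  Submodule.span_mono <| image_mono fun _ hs => le_trans hs h

lemma mul_mem_trigSpan (hf : f ∈ trigSpan σ) (hg : g ∈ trigSpan τ) :
    f * g ∈ trigSpan (σ + τ) := by
  have hfg := Submodule.mul_mem_mul hf hg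
  rw [trigSpan, trigSpan, Submodule.span_mul_span] at hfg
  refine Submodule.span_mono ?_ hfg
  rintro _ ⟨_, ⟨s, hs, rfl⟩, _, ⟨t, ht, rfl⟩, rfl⟩
  refine ⟨s + t, (abs_add_le s t).trans (add_le_add hs ht), ?_⟩
  ext x
  simp only [add_mul, AddChar.map_add_eq_mul, Circle.coe_mul, Pi.mul_apply]

lemma comp_affine_mem_trigSpan (hf : f ∈ trigSpan σ) (a b : ℝ) :
    (fun x => f (a * x + b)) ∈ trigSpan (|a| * σ) := by
  suffices trigSpan σ ≤
      (trigSpan (|a| * σ)).comap (LinearMap.funLeft ℂ ℂ fun x : ℝ => a * x + b) from this hf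
  refine Submodule.span_le.2 ?_
  rintro _ ⟨s, hs, rfl⟩
  have has : |s * a| ≤ |a| * σ := by
    rw [abs_mul, mul_comm]
    exact mul_le_mul_of_nonneg_left hs (abs_nonneg a)
  rw [SetLike.mem_coe, Submodule.mem_comap]
  convert (trigSpan (|a| * σ)).smul_mem (𝐞 (s * b) : ℂ) (fourierChar_mem_trigSpan has) using 1
  ext x
  simp only [LinearMap.funLeft_apply, Pi.smul_apply, smul_eq_mul, ← Circle.coe_mul,
    ← AddChar.map_add_eq_mul]
  congr 2
  ring

lemma cos_mem_trigSpan (s b : ℝ) :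
    (fun x : ℝ => (Real.cos (2 * Real.pi * (s * x) + b) : ℂ)) ∈ trigSpan |s| := by
  have hpos := (trigSpan |s|).smul_mem (Complex.exp (b * Complex.I) / 2)
    (fourierChar_mem_trigSpan (le_refl |s|))
  have hneg := (trigSpan |s|).smul_mem (Complex.exp (-(b * Complex.I)) / 2)
    (fourierChar_mem_trigSpan (abs_neg s).le)
  convert (trigSpan |s|).add_mem hpos hneg using 1
  ext x
  simp only [Pi.add_apply, Pi.smul_apply, smul_eq_mul, Real.fourierChar_apply]
  rw [Complex.ofReal_cos, Complex.cos, div_mul_eq_mul_div, div_mul_eq_mul_div, ← Complex.exp_add,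
    ← Complex.exp_add, ← add_div]
  congr 3 <;> · push_cast; ring

lemma prod_mem_trigSpan {ι : Type*} (S : Finset ι) {f : ι → ℝ → ℂ} {σ : ι → ℝ}
    (hf : ∀ i ∈ S, f i ∈ trigSpan (σ i)) : ∏ i ∈ S, f i ∈ trigSpan (∑ i ∈ S, σ i) := by
  induction S using Finset.cons_induction_on with
  | empty =>
    rw [Finset.prod_empty, Finset.sum_empty]
    convert fourierChar_mem_trigSpan (σ := 0) abs_zero.le using 1
    ext x
    simp only [Pi.one_apply, zero_mul, AddChar.map_zero_eq_one, Circle.coe_one]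
  | cons a S ha ih =>
    rw [Finset.prod_cons, Finset.sum_cons]
    exact mul_mem_trigSpan (hf a (Finset.mem_cons_self a S))
      (ih fun i hi => hf i (Finset.mem_cons_of_mem hi))

end TrigSpan

/-- Bounded pointwise limits of trigonometric sums with frequencies in `[-σ, σ]`: a class inside
the Bernstein space of `[-σ, σ]` that is stable under products and affine changes of variable for
elementary reasons. -/
def IsTrigLimit (σ : ℝ) (f : ℝ → ℂ) : Prop :=
  Continuous f ∧ ∃ (M : ℝ) (F : ℕ → ℝ → ℂ), (∀ n, F n ∈ trigSpan σ) ∧ (∀ n x, ‖F n x‖ ≤ M) ∧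
    ∀ x, Tendsto (fun n => F n x) atTop (𝓝 (f x))

lemma MemBernstein.of_mem_trigSpan {Ω : Set V} {σ : ℝ} {c u : V} {f : ℝ → ℂ}
    (hf : f ∈ trigSpan σ) (hΩ : ∀ s : ℝ, |s| ≤ σ → c + s • u ∈ Ω) :
    MemBernstein Ω (fun x => 𝐞 ⟪x, c⟫ * f ⟪x, u⟫) := by
  induction hf using Submodule.span_induction with
  | mem f hf =>
    obtain ⟨s, hs, rfl⟩ := hf
    convert MemBernstein.fourierChar (hΩ s hs) using 2 with x
    rw [← Circle.coe_mul, ← AddChar.map_add_eq_mul, inner_add_right, inner_smul_right]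
  | zero => simpa only [Pi.zero_apply, mul_zero] using MemBernstein.zero
  | add f g _ _ hf hg => simpa only [Pi.add_apply, mul_add] using hf.add hg
  | smul a f _ hf => simpa only [Pi.smul_apply, smul_eq_mul, mul_left_comm] using hf.const_mul a

namespace IsTrigLimit

variable {σ τ : ℝ} {f g : ℝ → ℂ}

lemma of_mem_trigSpan (hf : f ∈ trigSpan σ) (hfc : Continuous f) {M : ℝ}
    (hM : ∀ x, ‖f x‖ ≤ M) : IsTrigLimit σ f :=
  ⟨hfc, M, fun _ => f, fun _ => hf, fun _ => hM, fun _ => tendsto_const_nhds⟩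

lemma memBernstein (hf : IsTrigLimit σ f) {Ω : Set V} {c u : V}
    (hΩ : ∀ s : ℝ, |s| ≤ σ → c + s • u ∈ Ω) :
    MemBernstein Ω (fun x => 𝐞 ⟪x, c⟫ * f ⟪x, u⟫) := by
  obtain ⟨hc, M, F, hF, hM, hlim⟩ := hf
  refine MemBernstein.of_tendsto (fun n => MemBernstein.of_mem_trigSpan (hF n) hΩ) (M := M)
    (fun n x => ?_) (by fun_prop) (fun x => (hlim _).const_mul _)
  rw [norm_mul, Circle.norm_coe, one_mul]
  exact hM n _

lemma memBernstein_Icc (hf : IsTrigLimit σ f) : MemBernstein (Icc (-σ) σ) f := by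
  have h := hf.memBernstein (Ω := Icc (-σ) σ) (c := 0) (u := (1 : ℝ))
    (fun s hs => by simpa using abs_le.1 hs)
  simpa using h

lemma mono (hf : IsTrigLimit σ f) (h : σ ≤ τ) : IsTrigLimit τ f := by
  obtain ⟨hc, M, F, hF, hM, hlim⟩ := hf
  exact ⟨hc, M, F, fun n => trigSpan_mono h (hF n), hM, hlim⟩

lemma mul (hf : IsTrigLimit σ f) (hg : IsTrigLimit τ g) :
    IsTrigLimit (σ + τ) (fun x => f x * g x) := by
  obtain ⟨hc, M, F, hF, hM, hlim⟩ := hf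
  obtain ⟨hc', M', F', hF', hM', hlim'⟩ := hg
  refine ⟨hc.mul hc', M * M', fun n => F n * F' n, fun n => mul_mem_trigSpan (hF n) (hF' n),
    fun n x => ?_, fun x => (hlim x).mul (hlim' x)⟩
  exact norm_mul_le_of_le (hM n x) (hM' n x)

lemma zero : IsTrigLimit σ (fun _ => 0) :=
  of_mem_trigSpan (Submodule.zero_mem _) continuous_const fun _ => norm_zero.le

lemma add (hf : IsTrigLimit σ f) (hg : IsTrigLimit σ g) :
    IsTrigLimit σ (fun x => f x + g x) := by
  obtain ⟨hc, M, F, hF, hM, hlim⟩ := hf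
  obtain ⟨hc', M', F', hF', hM', hlim'⟩ := hg
  exact ⟨hc.add hc', M + M', fun n => F n + F' n, fun n => Submodule.add_mem _ (hF n) (hF' n),
    fun n x => norm_add_le_of_le (hM n x) (hM' n x), fun x => (hlim x).add (hlim' x)⟩

lemma sum {ι : Type*} (S : Finset ι) {f : ι → ℝ → ℂ} (hf : ∀ i ∈ S, IsTrigLimit σ (f i)) :
    IsTrigLimit σ (fun x => ∑ i ∈ S, f i x) := by
  induction S using Finset.cons_induction_on with
  | empty => simpa only [Finset.sum_empty] using zero
  | cons a S ha ih =>
    simp only [Finset.sum_cons]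
    exact (hf a (Finset.mem_cons_self a S)).add (ih fun i hi => hf i (Finset.mem_cons_of_mem hi))

lemma comp_affine (hf : IsTrigLimit σ f) (a b : ℝ) :
    IsTrigLimit (|a| * σ) (fun x => f (a * x + b)) := by
  obtain ⟨hc, M, F, hF, hM, hlim⟩ := hf
  exact ⟨by fun_prop, M, fun n x => F n (a * x + b), fun n => comp_affine_mem_trigSpan (hF n) a b,
    fun n x => hM n _, fun x => hlim _⟩

end IsTrigLimit

section Sinc

lemma prod_cos_mul_sinc (x : ℝ) (n : ℕ) :
    (∏ k ∈ Finset.range n, Real.cos (x / 2 ^ (k + 1))) * Real.sinc (x / 2 ^ n) = Real.sinc x := by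
  induction n with
  | zero => rw [Finset.prod_range_zero, pow_zero, div_one, one_mul]
  | succ n ih =>
    rw [Finset.prod_range_succ, ← ih, mul_assoc]
    congr 1
    set y := x / 2 ^ (n + 1) with hy
    have hxy : x / 2 ^ n = 2 * y := by rw [hy, pow_succ]; field_simp
    rw [hxy]
    rcases eq_or_ne y 0 with h | h
    · rw [h, mul_zero, Real.cos_zero, one_mul]
    · rw [Real.sinc_of_ne_zero h, Real.sinc_of_ne_zero (mul_ne_zero two_ne_zero h),
        Real.sin_two_mul]
      field_simp

lemma tendsto_prod_cos (x : ℝ) :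
    Tendsto (fun n => ∏ k ∈ Finset.range n, Real.cos (x / 2 ^ (k + 1))) atTop
      (𝓝 (Real.sinc x)) := by
  have hzero : Tendsto (fun n : ℕ => x / 2 ^ n) atTop (𝓝 0) :=
    tendsto_const_nhds.div_atTop (tendsto_pow_atTop_atTop_of_one_lt one_lt_two)
  have hone : Tendsto (fun n : ℕ => Real.sinc (x / 2 ^ n)) atTop (𝓝 1) := by
    rw [← Real.sinc_zero]
    exact (Real.continuous_sinc.tendsto 0).comp hzero
  have hquot := (tendsto_const_nhds (x := Real.sinc x)).div hone one_ne_zero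
  rw [div_one] at hquot
  refine hquot.congr' ?_
  filter_upwards [hone.eventually_ne one_ne_zero] with n hn
  rw [Pi.div_apply, div_eq_iff hn, prod_cos_mul_sinc]

lemma abs_mul_sinc_le (x : ℝ) : |x * Real.sinc x| ≤ 1 := by
  rcases eq_or_ne x 0 with rfl | h
  · rw [zero_mul, abs_zero]
    exact zero_le_one
  · rw [Real.sinc_of_ne_zero h, mul_div_cancel₀ _ h]
    exact Real.abs_sin_le_one x

lemma isTrigLimit_sinc {τ : ℝ} (hτ : 0 ≤ τ) (x₀ : ℝ) :
    IsTrigLimit τ (fun x => (Real.sinc (2 * Real.pi * τ * (x - x₀)) : ℂ)) := by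
  have := Real.continuous_sinc
  refine ⟨by fun_prop, 1, fun n => ∏ k ∈ Finset.range n,
    fun x => (Real.cos (2 * Real.pi * τ * (x - x₀) / 2 ^ (k + 1)) : ℂ), fun n => ?_, fun n x => ?_,
    fun x => ?_⟩
  · refine trigSpan_mono (σ := ∑ k ∈ Finset.range n, τ / 2 ^ (k + 1)) ?_
      (prod_mem_trigSpan _ fun k _ => ?_)
    · calc ∑ k ∈ Finset.range n, τ / 2 ^ (k + 1)
          = τ / 2 * ∑ k ∈ Finset.range n, (1 / 2 : ℝ) ^ k := by
            rw [Finset.mul_sum]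
            exact Finset.sum_congr rfl fun k _ => by rw [pow_succ, one_div, inv_pow]; field_simp
        _ ≤ τ / 2 * 2 := by gcongr; exact sum_geometric_two_le n
        _ = τ := by ring
    · have hmem := cos_mem_trigSpan (τ / 2 ^ (k + 1)) (-(2 * Real.pi * τ * x₀ / 2 ^ (k + 1)))
      rw [abs_of_nonneg (by positivity)] at hmem
      convert hmem using 4
      ring
  · dsimp only
    rw [Finset.prod_apply, norm_prod]
    refine Finset.prod_le_one (fun _ _ => norm_nonneg _) fun k _ => ?_
    rw [Complex.norm_real]
    exact Real.abs_cos_le_one _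
  · simp only [Finset.prod_apply, ← Complex.ofReal_prod]
    exact (Complex.continuous_ofReal.tendsto _).comp (tendsto_prod_cos _)

end Sinc

/-! ### Stability of sampling under enlarging the bandwidth -/

/-- Trigonometric limits of bandwidth `σ` are controlled, with constant `C`, by their values
on `H`. -/
def IsTrigSampling (σ C : ℝ) (H : Set ℝ) : Prop :=
  ∀ g, IsTrigLimit σ g → ∀ M ≥ 0, (∀ x ∈ H, ‖g x‖ ≤ M) → ∀ x, ‖g x‖ ≤ C * M

/-- The dilate of `f` about `x₀` with ratio `1 - q`, localized near `x₀` by a kernel of bandwidth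
`q * (σ / 2)`, which is half of what the dilation of a function of bandwidth `σ` saves. -/
def localizedDilate (f : ℝ → ℂ) (σ q x₀ x : ℝ) : ℂ :=
  f ((1 - q) * x + q * x₀) * Real.sinc (2 * Real.pi * (q * (σ / 2)) * (x - x₀))

section LocalizedDilate

variable {f : ℝ → ℂ} {σ δ q A G : ℝ}

lemma localizedDilate_self (f : ℝ → ℂ) (σ q x₀ : ℝ) : localizedDilate f σ q x₀ x₀ = f x₀ := by
  rw [localizedDilate, sub_self, mul_zero, Real.sinc_zero, Complex.ofReal_one, mul_one, ← add_mul,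
    sub_add_cancel, one_mul]

lemma IsTrigLimit.localizedDilate (hf : IsTrigLimit (σ + δ) f) (hσ : 0 ≤ σ) (hq : 0 ≤ q)
    (hq1 : q ≤ 1) (hδ : δ ≤ q * (σ / 2)) (x₀ : ℝ) :
    IsTrigLimit σ (localizedDilate f σ q x₀) := by
  refine ((hf.comp_affine (1 - q) (q * x₀)).mul (isTrigLimit_sinc (by positivity) x₀)).mono ?_
  rw [abs_of_nonneg (sub_nonneg.2 hq1)]
  calc (1 - q) * (σ + δ) + q * (σ / 2)
      ≤ (1 - q) * (σ + q * (σ / 2)) + q * (σ / 2) := by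
        have := sub_nonneg.2 hq1
        gcongr
    _ = σ - q ^ 2 * (σ / 2) := by ring
    _ ≤ σ := sub_le_self _ (by positivity)

lemma le_telescoping_of_le_of_mul_le {e t D : ℝ} (he : 0 ≤ e) (ht : 0 ≤ t) (h : e ≤ D * t)
    (h' : e * t ≤ D) : e ≤ 6 * D * (2 * t / (1 + 2 * t) - t / (1 + t)) := by
  have hsub : 2 * t / (1 + 2 * t) - t / (1 + t) = t / ((1 + t) * (1 + 2 * t)) := by
    field_simp
    ring
  rw [hsub, ← mul_div_assoc, le_div_iff₀ (by positivity)]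
  nlinarith [mul_nonneg he (sq_nonneg (t - 1)), mul_le_mul_of_nonneg_right h' ht]

lemma mul_le_telescoping {e s t b : ℝ} (he : 0 ≤ e) (hs : 0 ≤ s) (hs1 : s ≤ 1) (ht : 0 ≤ t)
    (hA : 0 ≤ A) (hb : 0 < b) (hnear : e ≤ A * G * t) (hfar : e ≤ 2 * G) (hst : b * (t * s) ≤ 1) :
    e * s ≤ 6 * ((A + 2 / b) * G) * (2 * t / (1 + 2 * t) - t / (1 + t)) := by
  have hG : 0 ≤ G := by linarith
  refine le_telescoping_of_le_of_mul_le (mul_nonneg he hs) ht ?_ ?_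
  · calc e * s ≤ A * G * t := (mul_le_of_le_one_right he hs1).trans hnear
      _ ≤ (A + 2 / b) * G * t := by
        gcongr
        exact le_add_of_nonneg_right (by positivity)
  · calc e * s * t = e * (t * s) := by ring
      _ ≤ 2 * G * (1 / b) := by
        gcongr
        rwa [le_div_iff₀' hb]
      _ = 2 / b * G := by ring
      _ ≤ (A + 2 / b) * G := by
        gcongr
        exact le_add_of_nonneg_left hA

lemma norm_localizedDilate_le (hσ : 0 < σ) (hq : 0 ≤ q) (hA : 0 ≤ A) (hG : ∀ x, ‖f x‖ ≤ G)
    (hlip : ∀ x y, ‖f x - f y‖ ≤ A * G * |x - y|) (x₀ x : ℝ) :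
    ‖localizedDilate f σ q x₀ x‖ ≤ ‖f x‖ + 6 * ((A + 2 / (Real.pi * σ)) * G) *
      (2 * (q * |x - x₀|) / (1 + 2 * (q * |x - x₀|)) - q * |x - x₀| / (1 + q * |x - x₀|)) := by
  set y := (1 - q) * x + q * x₀ with hy
  set s := Real.sinc (2 * Real.pi * (q * (σ / 2)) * (x - x₀)) with hs
  have hs1 : |s| ≤ 1 := Real.abs_sinc_le_one _
  have hst : Real.pi * σ * (q * |x - x₀| * |s|) ≤ 1 := by
    have h := abs_mul_sinc_le (2 * Real.pi * (q * (σ / 2)) * (x - x₀))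
    rw [abs_mul, ← hs, abs_mul, abs_of_nonneg (by positivity)] at h
    linarith
  have hnear : ‖f y - f x‖ ≤ A * G * (q * |x - x₀|) := by
    refine (hlip y x).trans_eq ?_
    rw [show y - x = -(q * (x - x₀)) by rw [hy]; ring, abs_neg, abs_mul, abs_of_nonneg hq]
  have hfar : ‖f y - f x‖ ≤ 2 * G := (norm_sub_le _ _).trans (by linarith [hG x, hG y])
  calc ‖localizedDilate f σ q x₀ x‖
      = ‖f x + (f y - f x)‖ * |s| := by
        rw [add_sub_cancel, localizedDilate, norm_mul, Complex.norm_real, Real.norm_eq_abs]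
    _ ≤ ‖f x‖ * |s| + ‖f y - f x‖ * |s| := by
        rw [← add_mul]
        gcongr
        exact norm_add_le _ _
    _ ≤ _ := add_le_add (mul_le_of_le_one_right (norm_nonneg _) hs1)
        (mul_le_telescoping (norm_nonneg _) (abs_nonneg _) hs1 (by positivity) hA (by positivity)
          hnear hfar hst)

lemma sum_telescoping_le_one {y : ℝ} (hy : 0 ≤ y) (K : ℕ) :
    ∑ k ∈ Finset.range K, (2 * ((1 / 2) ^ (k + 1) * y) / (1 + 2 * ((1 / 2) ^ (k + 1) * y)) -
      (1 / 2) ^ (k + 1) * y / (1 + (1 / 2) ^ (k + 1) * y)) ≤ 1 := by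
  have hdouble : ∀ k : ℕ, 2 * ((1 / 2) ^ (k + 1) * y) = (1 / 2) ^ k * y := fun k => by ring
  simp only [hdouble]
  rw [Finset.sum_range_sub' (fun k : ℕ => (1 / 2) ^ k * y / (1 + (1 / 2) ^ k * y)), pow_zero,
    one_mul]
  have hfirst : y / (1 + y) ≤ 1 := div_le_one_of_le₀ (by linarith) (by linarith)
  have hlast : 0 ≤ (1 / 2) ^ K * y / (1 + (1 / 2) ^ K * y) := by positivity
  linarith

lemma norm_sum_localizedDilate_le (hσ : 0 < σ) (hA : 0 ≤ A) (hG : ∀ x, ‖f x‖ ≤ G)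
    (hlip : ∀ x y, ‖f x - f y‖ ≤ A * G * |x - y|) (x₀ x : ℝ) (K : ℕ) :
    ‖∑ k ∈ Finset.range K, localizedDilate f σ ((1 / 2) ^ (k + 1)) x₀ x‖ ≤
      K * ‖f x‖ + 6 * ((A + 2 / (Real.pi * σ)) * G) := by
  have hG0 : 0 ≤ G := (norm_nonneg _).trans (hG 0)
  refine (norm_sum_le_of_le _ fun k _ =>
    norm_localizedDilate_le hσ (by positivity) hA hG hlip x₀ x).trans ?_
  rw [Finset.sum_add_distrib, Finset.sum_const, Finset.card_range, nsmul_eq_mul, ← Finset.mul_sum]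
  exact add_le_add le_rfl
    (mul_le_of_le_one_right (by positivity) (sum_telescoping_le_one (abs_nonneg _) K))

end LocalizedDilate

/-- Averaging the localized dilates of ratios `1 - 2⁻ᵏ` loses only `O(G / K)` on `H`, because the
errors of the different scales telescope. -/
lemma IsTrigSampling.exists_gt {σ C : ℝ} {H : Set ℝ} (hσ : 0 < σ) (h : IsTrigSampling σ C H) :
    ∃ δ > 0, IsTrigSampling (σ + δ) (2 * C) H := by
  obtain ⟨A, hA, hlip⟩ := MemBernstein.exists_lipschitz (σ := 2 * σ) (by positivity)
  set B := A + 2 / (Real.pi * σ)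
  obtain ⟨K, hK⟩ := exists_nat_gt (max (12 * B * C) 0)
  obtain ⟨hKC, hK0⟩ := max_lt_iff.1 hK
  have hδσ : (1 / 2 : ℝ) ^ K * (σ / 2) ≤ σ := by
    have : (1 / 2 : ℝ) ^ K ≤ 1 := pow_le_one₀ (by norm_num) (by norm_num)
    nlinarith
  refine ⟨(1 / 2) ^ K * (σ / 2), by positivity, fun f hf M hM hfM => ?_⟩
  have hfB := (hf.mono (τ := 2 * σ) (by linarith)).memBernstein_Icc
  have hbdd : BddAbove (range fun x => ‖f x‖) := by
    obtain ⟨G₀, hG₀⟩ := hfB.2.1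
    exact ⟨G₀, by rintro _ ⟨x, rfl⟩; exact hG₀ x⟩
  set G := ⨆ x, ‖f x‖
  have hfG : ∀ x, ‖f x‖ ≤ G := le_ciSup hbdd
  have hG0 : 0 ≤ G := (norm_nonneg _).trans (hfG 0)
  have hhalf : ∀ x₀, ‖f x₀‖ ≤ C * M + G / 2 := by
    intro x₀
    have hg : IsTrigLimit σ (fun x => ∑ k ∈ Finset.range K,
        localizedDilate f σ ((1 / 2) ^ (k + 1)) x₀ x) := by
      refine IsTrigLimit.sum _ fun k hk => hf.localizedDilate hσ.le (by positivity)
        (pow_le_one₀ (by norm_num) (by norm_num)) ?_ x₀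
      gcongr ?_ * _
      exact pow_le_pow_of_le_one (by norm_num) (by norm_num) (Finset.mem_range.1 hk)
    have hbound := h _ hg (K * M + 6 * (B * G)) (by positivity) (fun x hx =>
      (norm_sum_localizedDilate_le hσ hA.le hfG (hlip f hfB G hfG) x₀ x K).trans
        (by gcongr; exact hfM x hx)) x₀
    simp only [localizedDilate_self, Finset.sum_const, Finset.card_range, nsmul_eq_mul, norm_mul,
      Complex.norm_natCast] at hbound
    refine le_of_mul_le_mul_left (hbound.trans ?_) hK0
    nlinarith [mul_le_mul_of_nonneg_right hKC.le hG0]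
  have hG : G ≤ C * M + G / 2 := ciSup_le hhalf
  exact fun x => (hfG x).trans (by linarith)

/-! ### Necessity -/

/-- The trigonometric polynomial with zeros `Z + 2Rℤ`, of bandwidth `#Z / (4R)`: it has the least
bandwidth among those vanishing on `Z` whose modulus has period `2R`. -/
def sineProd (Z : Finset ℝ) (R x : ℝ) : ℝ := ∏ z ∈ Z, Real.sin (Real.pi * (x - z) / (2 * R))

section SineProd

variable {Z : Finset ℝ} {R : ℝ}

lemma sineProd_eq_zero {z : ℝ} (hz : z ∈ Z) : sineProd Z R z = 0 :=
  Finset.prod_eq_zero hz (by rw [sub_self, mul_zero, zero_div, Real.sin_zero])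

lemma continuous_sineProd (Z : Finset ℝ) (R : ℝ) : Continuous (sineProd Z R) := by
  unfold sineProd
  fun_prop

lemma periodic_abs_sineProd (Z : Finset ℝ) (hR : 0 < R) :
    Function.Periodic (fun x => |sineProd Z R x|) (2 * R) := by
  intro x
  simp only [sineProd, Finset.abs_prod]
  refine Finset.prod_congr rfl fun z _ => ?_
  rw [show Real.pi * (x + 2 * R - z) / (2 * R) = Real.pi * (x - z) / (2 * R) + Real.pi by
    field_simp; ring, Real.sin_add_pi, abs_neg]

lemma sineProd_mem_trigSpan (Z : Finset ℝ) (hR : 0 < R) :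
    (fun x => (sineProd Z R x : ℂ)) ∈ trigSpan (Z.card / (4 * R)) := by
  have h := prod_mem_trigSpan Z fun z _ =>
    cos_mem_trigSpan (1 / (4 * R)) (-(Real.pi * z / (2 * R)) - Real.pi / 2)
  rw [Finset.sum_const, nsmul_eq_mul, abs_of_pos (by positivity), mul_one_div] at h
  convert h using 1
  ext x
  rw [sineProd, Complex.ofReal_prod, Finset.prod_apply]
  refine Finset.prod_congr rfl fun z _ => ?_
  rw [← Real.cos_sub_pi_div_two]
  congr 2
  field_simp
  ring

lemma exists_sineProd_ne_zero (Z : Finset ℝ) (hR : 0 < R) : ∃ y, sineProd Z R y ≠ 0 := by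
  have hcount : (⋃ z ∈ Z, range fun k : ℤ => 2 * R * k + z).Countable :=
    Z.countable_toSet.biUnion fun z _ => countable_range _
  obtain ⟨y, hy⟩ := (hcount.dense_compl ℝ).nonempty
  refine ⟨y, Finset.prod_ne_zero_iff.2 fun z hz hzero => hy ?_⟩
  obtain ⟨k, hk⟩ := Real.sin_eq_zero_iff.1 hzero
  refine mem_biUnion hz ⟨k, ?_⟩
  have hpi := Real.pi_ne_zero
  field_simp at hk
  linarith

lemma exists_isMax_abs_sineProd (Z : Finset ℝ) (hR : 0 < R) (x₀ : ℝ) :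
    ∃ m, |m - x₀| ≤ R ∧ 0 < |sineProd Z R m| ∧ ∀ x, |sineProd Z R x| ≤ |sineProd Z R m| := by
  obtain ⟨m, hm, hmax⟩ := (isCompact_Icc (a := x₀ - R) (b := x₀ + R)).exists_isMaxOn
    ⟨x₀, by constructor <;> linarith⟩ (continuous_sineProd Z R).abs.continuousOn
  have hmax' : ∀ x, |sineProd Z R x| ≤ |sineProd Z R m| := by
    intro x
    obtain ⟨y, hy, hxy⟩ :=
      (periodic_abs_sineProd Z hR).exists_mem_Ico (by positivity) x (x₀ - R)
    exact hxy.trans_le (hmax ⟨hy.1, by linarith [hy.2]⟩)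
  obtain ⟨y, hy⟩ := exists_sineProd_ne_zero Z hR
  exact ⟨m, abs_le.2 ⟨by linarith [hm.1], by linarith [hm.2]⟩,
    (abs_pos.2 hy).trans_le (hmax' y), hmax'⟩

end SineProd

lemma mul_abs_sinc_le_one {A ε m x : ℝ} (hε : 0 < ε) (h : A / ε ≤ |x - m|) :
    A * |Real.sinc (2 * Real.pi * ε * (x - m))| ≤ 1 := by
  have hdecay := abs_mul_sinc_le (2 * Real.pi * ε * (x - m))
  rw [abs_mul, abs_mul, abs_of_pos (by positivity)] at hdecay
  refine le_trans ?_ hdecay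
  gcongr
  calc A ≤ 1 * (|x - m| * ε) := by rwa [one_mul, ← div_le_iff₀ hε]
    _ ≤ 2 * Real.pi * (|x - m| * ε) := by
      gcongr
      linarith [Real.pi_gt_three]
    _ = 2 * Real.pi * ε * |x - m| := by ring

namespace IsTrigSampling

variable {σ τ C : ℝ} {H : Set ℝ}

/-- Otherwise `sineProd` of the nodes in the ball would have so small a bandwidth that a localizing
factor can be afforded; the product vanishes at those nodes and is small at all the others. -/
lemma exists_lt_ncard (h : IsTrigSampling τ C H) (hC : 0 ≤ C) (hH : UniformlyDiscrete H)
    {ε : ℝ} (hε : 0 < ε) :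
    ∃ w ≥ 0, ∀ R > 0, ∀ x₀, 4 * R * (τ - ε) < (H ∩ closedBall x₀ (R + w)).ncard := by
  refine ⟨(C + 1) / ε, by positivity, fun R hR x₀ => ?_⟩
  set w := (C + 1) / ε
  by_contra! hcard
  obtain ⟨_, -, hδ⟩ := hH.exists_ncard_inter_closedBall_le
  have hfin := (hδ (R + w) (by positivity) x₀).1
  rw [Set.ncard_eq_toFinset_card _ hfin] at hcard
  obtain ⟨m, hm, hpm, hmax⟩ := exists_isMax_abs_sineProd hfin.toFinset hR x₀
  set p := sineProd hfin.toFinset R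
  set s : ℝ → ℝ := fun x => Real.sinc (2 * Real.pi * ε * (x - m))
  have hg : IsTrigLimit τ (fun x => (p x : ℂ) * (s x : ℂ)) := by
    refine ((IsTrigLimit.of_mem_trigSpan (M := |p m|) (sineProd_mem_trigSpan _ hR)
      (Complex.continuous_ofReal.comp (continuous_sineProd _ _)) fun x => ?_).mul
      (isTrigLimit_sinc hε.le m)).mono ?_
    · rw [Complex.norm_real]
      exact hmax x
    · rw [← le_sub_iff_add_le, div_le_iff₀ (by positivity)]
      linarith
  have hnorm : ∀ x, ‖(p x : ℂ) * (s x : ℂ)‖ = |p x| * |s x| := fun x => by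
    rw [norm_mul, Complex.norm_real, Complex.norm_real, Real.norm_eq_abs, Real.norm_eq_abs]
  have hfar : ∀ x ∉ closedBall x₀ (R + w), |s x| ≤ 1 / (C + 1) := by
    intro x hx
    rw [mem_closedBall, Real.dist_eq, not_le] at hx
    rw [le_div_iff₀' (by positivity)]
    exact mul_abs_sinc_le_one hε (by linarith [abs_sub_le x m x₀])
  have hle := h _ hg (|p m| / (C + 1)) (by positivity) (fun x hx => ?_) m
  · rw [hnorm, show s m = 1 by simp only [s, sub_self, mul_zero, Real.sinc_zero], abs_one,
      mul_one, ← mul_div_assoc, le_div_iff₀ (by positivity)] at hle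
    linarith
  · rw [hnorm]
    by_cases hxZ : x ∈ closedBall x₀ (R + w)
    · rw [show p x = 0 from sineProd_eq_zero (hfin.mem_toFinset.2 ⟨hx, hxZ⟩), abs_zero, zero_mul]
      positivity
    · rw [div_eq_mul_one_div]
      exact mul_le_mul (hmax x) (hfar x hxZ) (abs_nonneg _) (abs_nonneg _)

theorem lt_lowerUniformDensity (h : IsTrigSampling σ C H) (hσ : 0 < σ) (hC : 0 ≤ C)
    (hH : UniformlyDiscrete H) : 2 * σ < lowerUniformDensity H := by
  obtain ⟨δ, hδ, hS⟩ := h.exists_gt hσ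
  obtain ⟨w, hw, hcount⟩ := hS.exists_lt_ncard (by positivity) hH (half_pos hδ)
  refine (show 2 * σ < 2 * σ + δ / 2 by linarith).trans_le
    (hH.le_lowerUniformDensity (r₀ := w + 1 + w * (2 * σ + δ) / (δ / 2)) fun r hr x => ?_)
  have hquot : 0 ≤ w * (2 * σ + δ) / (δ / 2) := by positivity
  have hc := hcount (r - w) (by linarith) x
  rw [sub_add_cancel] at hc
  refine le_trans ?_ hc.le
  have hwr : w * (2 * σ + δ) ≤ r * (δ / 2) := by
    rw [← div_le_iff₀ (by positivity)]
    linarith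
  linarith

end IsTrigSampling

lemma IsSamplingSet.exists_isTrigSampling {Ω : Set V} {u c : V} {σ : ℝ} {H : Set ℝ}
    (h : IsSamplingSet Ω {x | ⟪x, u⟫ ∈ H}) (hu : ‖u‖ = 1)
    (hΩ : ∀ s : ℝ, |s| ≤ σ → c + s • u ∈ Ω) : ∃ C > 0, IsTrigSampling σ C H := by
  obtain ⟨C, hC, h⟩ := isSamplingSet_iff.1 h
  refine ⟨C, hC, fun g hg M hM hgH t => ?_⟩
  have hnorm : ∀ x : V, ‖(𝐞 ⟪x, c⟫ : ℂ) * g ⟪x, u⟫‖ = ‖g ⟪x, u⟫‖ := fun x => by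
    rw [norm_mul, Circle.norm_coe, one_mul]
  have ht := h _ (hg.memBernstein hΩ) M hM (fun x hx => (hnorm x).trans_le (hgH _ hx)) (t • u)
  rwa [hnorm, real_inner_smul_left, real_inner_self_eq_norm_sq, hu, one_pow, mul_one] at ht

lemma exists_forall_add_smul_mem_of_smul_mem_sub {E : Type*} [AddCommGroup E] [Module ℝ E]
    {Ω : Set E} (hΩ : Convex ℝ Ω) {u : E} {σ : ℝ} (hσ : 0 < σ) (h : (2 * σ) • u ∈ Ω - Ω) :
    ∃ c, ∀ s : ℝ, |s| ≤ σ → c + s • u ∈ Ω := by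
  obtain ⟨p, hp, q, hq, hpq⟩ := h
  refine ⟨(1 / 2 : ℝ) • (p + q), fun s hs => ?_⟩
  have hs' : |s / (2 * σ)| ≤ 1 / 2 := by
    rw [abs_div, abs_of_pos (by positivity : 0 < 2 * σ), div_le_iff₀ (by positivity)]
    linarith
  obtain ⟨hlo, hhi⟩ := abs_le.1 hs'
  have hsu : s • u = (s / (2 * σ)) • (p - q) := by
    rw [show p - q = (2 * σ) • u from hpq, smul_smul, div_mul_cancel₀ _ (by positivity)]
  rw [hsu, show (1 / 2 : ℝ) • (p + q) + (s / (2 * σ)) • (p - q) =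
    (1 / 2 + s / (2 * σ)) • p + (1 / 2 - s / (2 * σ)) • q by module]
  exact hΩ hp hq (by linarith) (by linarith) (by ring)

theorem IsSamplingSet.lowerUniformDensity_smul_notMem {Ω : Set V} {u : V} {H : Set ℝ}
    (h : IsSamplingSet Ω {x | ⟪x, u⟫ ∈ H}) (hΩ : Convex ℝ Ω) (hΩc : IsCompact Ω)
    (hΩpos : 0 < volume Ω) (hu : ‖u‖ = 1) (hH : UniformlyDiscrete H) :
    lowerUniformDensity H • u ∉ Ω - Ω := by
  intro hD
  obtain ⟨σ, hσ, hDσ, hσu⟩ : ∃ σ > 0, lowerUniformDensity H ≤ 2 * σ ∧ (2 * σ) • u ∈ Ω - Ω := by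
    rcases hH.lowerUniformDensity_nonneg.eq_or_lt with hzero | hDpos
    · have hnhds : Ω - Ω ∈ 𝓝 (0 : V) := Measure.sub_mem_nhds_zero_of_addHaar_pos_ne_top volume Ω
        hΩc.measurableSet hΩpos hΩc.measure_lt_top.ne
      have hcont : Tendsto (fun s : ℝ => (2 * s) • u) (𝓝[>] 0) (𝓝 0) :=
        tendsto_nhdsWithin_of_tendsto_nhds (Continuous.tendsto' (by fun_prop) _ _ (by simp))
      obtain ⟨s, hsu, hs⟩ := ((hcont.eventually hnhds).and self_mem_nhdsWithin).exists
      have hs : 0 < s := hs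
      exact ⟨s, hs, by rw [← hzero]; positivity, hsu⟩
    · exact ⟨lowerUniformDensity H / 2, by positivity, by linarith,
        by rwa [mul_div_cancel₀ _ two_ne_zero]⟩
  obtain ⟨c, hc⟩ := exists_forall_add_smul_mem_of_smul_mem_sub hΩ hσ hσu
  obtain ⟨C, hC, hS⟩ := h.exists_isTrigSampling hu hc
  exact (hS.lt_lowerUniformDensity hσ hC.le hH).not_ge hDσ

/-! ### Sufficiency -/

section Projection

variable {E : Type*} [NormedAddCommGroup E] [InnerProductSpace ℝ E] {u : E}

lemma starProjection_orthogonal_add_inner_smul (hu : ‖u‖ = 1) (x : E) :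
    (ℝ ∙ u)ᗮ.starProjection x + ⟪x, u⟫ • u = x := by
  rw [real_inner_comm, ← Submodule.starProjection_unit_singleton ℝ hu, add_comm]
  exact Submodule.starProjection_add_starProjection_orthogonal x

lemma inner_add_of_mem_orthogonal {v : E} (hv : v ∈ (ℝ ∙ u)ᗮ) (x : E) :
    ⟪x + v, u⟫ = ⟪x, u⟫ := by
  rw [inner_add_left, Submodule.mem_orthogonal_singleton_iff_inner_left.1 hv, add_zero]

lemma inner_add_smul_self (hu : ‖u‖ = 1) (x : E) (t : ℝ) : ⟪x + t • u, u⟫ = ⟪x, u⟫ + t := by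
  rw [inner_add_left, real_inner_smul_left, real_inner_self_eq_norm_sq, hu, one_pow, mul_one]

lemma setOf_exists_eq_add_smul (hu : ‖u‖ = 1) (H : Set ℝ) :
    {x | ∃ a ∈ H, ∃ y : E, ⟪y, u⟫ = 0 ∧ x = y + a • u} = {x | ⟪x, u⟫ ∈ H} := by
  ext x
  constructor
  · rintro ⟨a, ha, y, hy, rfl⟩
    rwa [mem_ofPred_eq, inner_add_smul_self hu, hy, zero_add]
  · exact fun hx => ⟨_, hx, (ℝ ∙ u)ᗮ.starProjection x,
      Submodule.mem_orthogonal_singleton_iff_inner_left.1 (Submodule.starProjection_apply_mem _ _),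
      (starProjection_orthogonal_add_inner_smul hu x).symm⟩

/-- The ray `{t • u | D ≤ t}` misses the star-shaped compact set `K`, hence stays at positive
distance from it. -/
lemma exists_inner_le_of_smul_notMem {K : Set E} (hK : IsCompact K) (hstar : StarConvex ℝ 0 K)
    (hu : ‖u‖ = 1) {D : ℝ} (hD : 0 ≤ D) (hDK : D • u ∉ K) :
    ∃ L < D, ∃ η > 0, ∀ w ∈ K, ‖(ℝ ∙ u)ᗮ.starProjection w‖ < η → ⟪w, u⟫ ≤ L := by
  have hray : IsClosed ((fun t : ℝ => t • u) '' Ici D) :=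
    (isClosedEmbedding_smul_left (norm_ne_zero_iff.1 (by simp [hu]))).isClosedMap _ isClosed_Ici
  have hdisj : Disjoint K ((fun t : ℝ => t • u) '' Ici D) := by
    rw [disjoint_right]
    rintro _ ⟨t, ht, rfl⟩ htK
    have ht' : 0 ≤ t := hD.trans ht
    refine hDK ?_
    convert hstar.smul_mem htK (div_nonneg hD ht') (div_le_one_of_le₀ ht ht') using 1
    rw [smul_smul, div_mul_cancel_of_imp fun h => le_antisymm (h ▸ ht) hD]
  obtain ⟨r, hr, hlt⟩ := exists_pos_forall_lt_edist hK hray hdisj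
  have : (0 : ℝ) < r := hr
  refine ⟨D - r / 2, by linarith, r / 2, by positivity, fun w hw hη => ?_⟩
  by_contra! hL
  have hdist : (r : ℝ) < ‖w - max ⟪w, u⟫ D • u‖ := by
    rw [← dist_eq_norm]
    have h := hlt w hw _ ⟨_, le_max_right ⟪w, u⟫ D, rfl⟩
    rwa [edist_nndist, ENNReal.coe_lt_coe, ← NNReal.coe_lt_coe, coe_nndist] at h
  have hsplit : w - max ⟪w, u⟫ D • u =
      (ℝ ∙ u)ᗮ.starProjection w + (⟪w, u⟫ - max ⟪w, u⟫ D) • u := by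
    nth_rw 1 [← starProjection_orthogonal_add_inner_smul hu w]
    module
  have habs : |⟪w, u⟫ - max ⟪w, u⟫ D| ≤ r / 2 := by
    rw [abs_le]
    constructor <;> rcases max_cases ⟪w, u⟫ D with h | h <;> linarith
  have hnorm := norm_add_le ((ℝ ∙ u)ᗮ.starProjection w) ((⟪w, u⟫ - max ⟪w, u⟫ D) • u)
  rw [← hsplit, norm_smul, Real.norm_eq_abs, hu, mul_one] at hnorm
  linarith

end Projection

lemma exists_subset_Icc_of_sub_le {T : Set ℝ} {L : ℝ} (h : ∀ p ∈ T, ∀ q ∈ T, p - q ≤ L) :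
    ∃ a, T ⊆ Icc a (a + L) := by
  rcases T.eq_empty_or_nonempty with rfl | ⟨p, hp⟩
  · exact ⟨0, empty_subset _⟩
  · have hb : BddBelow T := ⟨p - L, fun q hq => sub_le_comm.1 (h p hp q hq)⟩
    refine ⟨sInf T, fun q hq => ⟨csInf_le hb hq, sub_le_iff_le_add.1 ?_⟩⟩
    exact le_csInf ⟨p, hp⟩ fun s hs => sub_le_comm.1 (h q hq s hs)

lemma exists_finite_smooth_partition {E : Type*} [NormedAddCommGroup E] [InnerProductSpace ℝ E]
    [FiniteDimensional ℝ E] {S : Set E} (hS : IsCompact S) {r : ℝ} (hr : 0 < r) :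
    ∃ (t : Finset E) (θ : t → E → ℂ),
      (∀ z, IsTestFunction (θ z) ∧ tsupport (θ z) ⊆ ball (z : E) r) ∧
      ∀ x ∈ S, ∀ᶠ y in 𝓝 x, ∑ z, θ z y = 1 := by
  obtain ⟨t, -, ht, hcov⟩ := (hS.cthickening (r := 1)).finite_cover_balls hr
  lift t to Finset E using ht
  obtain ⟨θ, hθ⟩ := SmoothPartitionOfUnity.exists_isSubordinate (modelWithCornersSelf ℝ E)
    isClosed_cthickening (fun z : t => ball (z : E) r) (fun _ => isOpen_ball)
    (hcov.trans (by simp [iUnion_subtype]))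
  refine ⟨t, fun z s => (θ z s : ℂ), fun z => ⟨IsTestFunction.ofReal
    (contMDiff_iff_contDiff.1 (θ z).contMDiff) ?_, ?_⟩, fun x hx => ?_⟩
  · exact HasCompactSupport.of_support_subset_isCompact (isCompact_closedBall (z : E) r)
      ((subset_tsupport _).trans ((hθ z).trans ball_subset_closedBall))
  · exact (tsupport_comp_subset Complex.ofReal_zero (θ z)).trans (hθ z)
  · filter_upwards [isOpen_thickening.mem_nhds (self_subset_thickening one_pos S hx)] with y hy
    have h := θ.sum_eq_one (thickening_subset_cthickening 1 S hy)
    rw [finsum_eq_sum_of_fintype] at h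
    exact_mod_cast h

/-- The Fourier multiplier whose symbol is the smooth function `θ` composed with the orthogonal
projection onto `K`, written as an average of translates along `K`. -/
def subspaceMultiplier (K : Submodule ℝ V) (θ f : V → ℂ) (x : V) : ℂ :=
  ∫ v, f (x + K.starProjection v) * 𝓕 θ v

section SubspaceMultiplier

variable {K : Submodule ℝ V} {θ f : V → ℂ} {Ω : Set V}

lemma norm_subspaceMultiplier_le (hθ : IsTestFunction θ) {x : V} {M : ℝ}
    (hM : ∀ v ∈ K, ‖f (x + v)‖ ≤ M) :
    ‖subspaceMultiplier K θ f x‖ ≤ M * ∫ v, ‖𝓕 θ v‖ :=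
  norm_integral_mul_le_of_norm_le (fun v => hM _ (K.starProjection_apply_mem v))
    hθ.integrable_fourier

lemma integral_fourierChar_starProjection_mul_fourier (hθ : IsTestFunction θ) (s : V) :
    ∫ v, 𝐞 ⟪s, K.starProjection v⟫ * 𝓕 θ v = θ (K.starProjection s) := by
  simp only [← Submodule.inner_starProjection_left_eq_right]
  exact hθ.integral_fourierChar_mul_fourier _

lemma MemBernstein.subspaceMultiplier (hf : MemBernstein Ω f) (hθ : IsTestFunction θ) :
    MemBernstein (Ω ∩ K.starProjection ⁻¹' tsupport θ) (subspaceMultiplier K θ f) :=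
  (hf.average hθ.integrable_fourier K.starProjection.measurable
    (integral_fourierChar_starProjection_mul_fourier hθ)
    (hθ.contDiff.comp K.starProjection.contDiff)).mono
    (inter_subset_inter_right _ (tsupport_comp_subset_preimage θ K.starProjection.continuous))

lemma MemBernstein.sum_subspaceMultiplier (hf : MemBernstein Ω f) {ι : Type*} [Fintype ι]
    {θ : ι → V → ℂ} (hθ : ∀ z, IsTestFunction (θ z))
    (hsum : ∀ s ∈ Ω, ∀ᶠ y in 𝓝 (K.starProjection s), ∑ z, θ z y = 1) (x : V) :
    ∑ z, _root_.subspaceMultiplier K (θ z) f x = f x := by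
  have hcont : Continuous (fun v => K.starProjection v) := K.starProjection.continuous
  have hint : ∀ z, Integrable fun v => f (x + K.starProjection v) * 𝓕 (θ z) v := fun z => by
    obtain ⟨B, hB⟩ := hf.2.1
    exact (hθ z).integrable_fourier.bdd_mul (hf.1.comp (by fun_prop)).aestronglyMeasurable
      (ae_of_all _ fun _ => hB _)
  have hchar : ∀ s z, Integrable fun v => (𝐞 ⟪s, K.starProjection v⟫ : ℂ) * 𝓕 (θ z) v :=
    fun s z => by
      simp only [real_inner_comm _ s]
      exact (hθ z).integrable_fourier.bdd_mul (c := 1)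
        ((contDiff_fourierChar_inner s).continuous.comp hcont).aestronglyMeasurable
        (ae_of_all _ fun _ => (Circle.norm_coe _).le)
  simp only [_root_.subspaceMultiplier]
  rw [← integral_finsetSum _ fun z _ => hint z]
  simp only [← Finset.mul_sum]
  refine hf.average_eq_self (m := fun s => ∑ z, θ z (K.starProjection s))
    (integrable_finsetSum _ fun z _ => (hθ z).integrable_fourier) hcont.measurable (fun s => ?_)
    (ContDiff.sum fun z _ => (hθ z).contDiff.comp K.starProjection.contDiff) ?_ x
  · simp only [Finset.mul_sum]
    rw [integral_finsetSum _ fun z _ => hchar s z]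
    simp only [integral_fourierChar_starProjection_mul_fourier (hθ _)]
  · refine eq_empty_of_forall_notMem fun s hs => notMem_tsupport_iff_eventuallyEq.2 ?_ hs.1
    filter_upwards [hcont.continuousAt.eventually (hsum s hs.2)] with y hy
    rw [hy, sub_self, Pi.zero_apply]

lemma isSamplingSet_of_forall_ball {P : Set V} (hP : ∀ p ∈ P, ∀ v ∈ K, p + v ∈ P)
    (hΩ : IsCompact Ω) {r : ℝ} (hr : 0 < r)
    (h : ∀ z, IsSamplingSet (Ω ∩ K.starProjection ⁻¹' ball z r) P) : IsSamplingSet Ω P := by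
  obtain ⟨t, θ, hθ, hsum⟩ := exists_finite_smooth_partition
    (hΩ.image K.starProjection.continuous) hr
  choose C hC hbound using fun z : t => isSamplingSet_iff.1 (h z)
  have hnonneg : 0 ≤ ∑ z, C z * ∫ v, ‖𝓕 (θ z) v‖ :=
    Finset.sum_nonneg fun z _ => mul_nonneg (hC z).le (integral_nonneg fun v => norm_nonneg _)
  refine isSamplingSet_iff.2 ⟨(∑ z, C z * ∫ v, ‖𝓕 (θ z) v‖) + 1, by positivity,
    fun f hf M hM hfM x => ?_⟩
  have hpiece (z : t) : ‖subspaceMultiplier K (θ z) f x‖ ≤ C z * (M * ∫ v, ‖𝓕 (θ z) v‖) :=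
    hbound z _ ((hf.subspaceMultiplier (hθ z).1).mono
      (inter_subset_inter_right _ (preimage_mono (hθ z).2))) _ (by positivity)
      (fun p hp => norm_subspaceMultiplier_le (hθ z).1 fun v hv => hfM _ (hP p hp v hv)) x
  calc ‖f x‖ = ‖∑ z, subspaceMultiplier K (θ z) f x‖ := by
        rw [hf.sum_subspaceMultiplier (fun z => (hθ z).1) fun s hs => hsum _ ⟨s, hs, rfl⟩]
    _ ≤ ∑ z, C z * (M * ∫ v, ‖𝓕 (θ z) v‖) := norm_sum_le_of_le _ fun z _ => hpiece z
    _ = (∑ z, C z * ∫ v, ‖𝓕 (θ z) v‖) * M := by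
        rw [Finset.sum_mul]
        exact Finset.sum_congr rfl fun z _ => by ring
    _ ≤ _ := by gcongr; linarith

end SubspaceMultiplier

section Sufficiency

variable {Ω : Set V} {u : V} {H : Set ℝ}

lemma IsSamplingSet.setOf_inner_mem {L : ℝ} (h : IsSamplingSet (Icc (-(L / 2)) (L / 2)) H)
    (hu : ‖u‖ = 1) (hΩ : ∀ p ∈ Ω, ∀ q ∈ Ω, ⟪p, u⟫ - ⟪q, u⟫ ≤ L) :
    IsSamplingSet Ω {x | ⟪x, u⟫ ∈ H} := by
  obtain ⟨C, hC, hbound⟩ := isSamplingSet_iff.1 h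
  refine isSamplingSet_iff.2 ⟨C, hC, fun f hf M hM hfM x => ?_⟩
  obtain ⟨a, ha⟩ := exists_subset_Icc_of_sub_le (T := (⟪·, u⟫) '' Ω) (L := L) (by
    rintro _ ⟨p, hp, rfl⟩ _ ⟨q, hq, rfl⟩
    exact hΩ p hp q hq)
  set y := (ℝ ∙ u)ᗮ.starProjection x
  have hy : ⟪y, u⟫ = 0 :=
    Submodule.mem_orthogonal_singleton_iff_inner_left.1 (Submodule.starProjection_apply_mem _ _)
  have hline : MemBernstein (Icc a (a + L)) (fun t : ℝ => f (y + t • u)) :=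
    hf.comp_add_linearMap (ContinuousLinearMap.toSpanSingleton ℝ u) (fun s hs => by
      rw [ContinuousLinearMap.adjoint_toSpanSingleton, innerSL_apply_apply, real_inner_comm]
      exact ha ⟨s, hs, rfl⟩) y
  have hcentred := hline.fourierChar_mul (-(a + L / 2)) (Ω' := Icc (-(L / 2)) (L / 2))
    fun s hs => ⟨by linarith [hs.1], by linarith [hs.2]⟩
  have := hbound _ hcentred M hM (fun t ht => by
    rw [norm_mul, Circle.norm_coe, one_mul]
    exact hfM _ (by rwa [mem_ofPred_eq, inner_add_smul_self hu, hy, zero_add])) ⟪x, u⟫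
  rwa [norm_mul, Circle.norm_coe, one_mul, starProjection_orthogonal_add_inner_smul hu] at this

theorem isSamplingSet_of_lowerUniformDensity_smul_notMem (hΩc : IsCompact Ω) (hΩ : Convex ℝ Ω)
    (hne : Ω.Nonempty) (hu : ‖u‖ = 1) (hH : UniformlyDiscrete H)
    (hD : lowerUniformDensity H • u ∉ Ω - Ω) : IsSamplingSet Ω {x | ⟪x, u⟫ ∈ H} := by
  have hzero : (0 : V) ∈ Ω - Ω := hne.zero_mem_sub
  have hcompact : IsCompact (Ω - Ω) := sub_eq_add_neg Ω Ω ▸ hΩc.add hΩc.neg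
  obtain ⟨L, hLD, η, hη, hfib⟩ := exists_inner_le_of_smul_notMem hcompact
    ((hΩ.sub hΩ).starConvex hzero) hu hH.lowerUniformDensity_nonneg hD
  have hL : 0 ≤ L := by simpa using hfib 0 hzero (by simpa using hη)
  have hsampling : IsSamplingSet (Icc (-(L / 2)) (L / 2)) H :=
    hH.isSamplingSet_of_lt_lowerUniformDensity (by positivity) (by linarith)
  refine isSamplingSet_of_forall_ball (K := (ℝ ∙ u)ᗮ) (r := η / 2)
    (fun p hp v hv => by rwa [mem_ofPred_eq, inner_add_of_mem_orthogonal hv]) hΩc (by positivity)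
    fun z => hsampling.setOf_inner_mem hu fun p hp q hq => ?_
  rw [← inner_sub_left]
  refine hfib _ (sub_mem_sub hp.1 hq.1) ?_
  rw [map_sub, ← dist_eq_norm]
  linarith [dist_triangle_right ((ℝ ∙ u)ᗮ.starProjection p) ((ℝ ∙ u)ᗮ.starProjection q) z,
    mem_ball.1 hp.2, mem_ball.1 hq.2]

end Sufficiency

theorem parallel_hyperplanes_sampling_general {Ω : Set V} (hΩcompact : IsCompact Ω)
    (hΩconvex : Convex ℝ Ω) (hΩpos : 0 < volume Ω) {u : V} (hu : ‖u‖ = 1) {H : Set ℝ}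
    (hH : UniformlyDiscrete H) :
    IsSamplingSet Ω {x | ∃ a ∈ H, ∃ y : V, ⟪y, u⟫ = 0 ∧ x = y + a • u} ↔
      lowerUniformDensity H • u ∉ Ω - Ω := by
  rw [setOf_exists_eq_add_smul hu]
  exact ⟨fun h => h.lowerUniformDensity_smul_notMem hΩconvex hΩcompact hΩpos hu hH,
    isSamplingSet_of_lowerUniformDensity_smul_notMem hΩcompact hΩconvex
      (nonempty_of_measure_ne_zero hΩpos.ne') hu hH⟩

/-- Higher-dimensional parallel hyperplanes: for `d ≥ 3`, `P = l + H·u_l` is a sampling set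
for `B_Ω` iff `D⁻(H)·u_l ∉ Ω − Ω`. -/
theorem parallel_hyperplanes_sampling
    (d : ℕ) (hd : 3 ≤ d)
    (Ω : Set (EuclideanSpace ℝ (Fin d))) (hΩcompact : IsCompact Ω) (hΩconvex : Convex ℝ Ω)
    (hΩpos : 0 < volume Ω)
    (u : EuclideanSpace ℝ (Fin d)) (hu : ‖u‖ = 1)
    (H : Set ℝ) (hH : UniformlyDiscrete H)
    (P : Set (EuclideanSpace ℝ (Fin d)))
    (hP : P = {x | ∃ a ∈ H, ∃ y : EuclideanSpace ℝ (Fin d), ⟪y, u⟫ = 0 ∧ x = y + a • u}) :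
    IsSamplingSet Ω P ↔ lowerUniformDensity H • u ∉ Ω - Ω := by
  subst hP
  exact parallel_hyperplanes_sampling_general hΩcompact hΩconvex hΩpos hu hH
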